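/- arXiv:1409.3117 — 2 statements merged into one kernel-verified Lean document; each statement's English description precedes it below -/
import Mathlib

section
/- Let d ≥ 1 and let m denote the normalized Haar measure on the d-dimensional torus 𝕋^d (the d-fold product of the unit circle in ℂ with the product of normalized Lebesgue measures). Then the integral ∫_{𝕋^d} |z₁ + z₂ + ⋯ + z_d|/√d dm(z) converges to √π/2 as d → ∞. -/
open MeasureTheory

noncomputable instance : MeasurableSpace Circle := borel Circle
instance : BorelSpace Circle := ⟨rfl⟩

/-- The normalized Lebesgue (arc-length) measure on the unit circle `{z : ℂ | |z| = 1}`,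
a probability measure; it is the normalized Haar measure of the circle group. -/
noncomputable def circleHaar : Measure Circle :=
  (ENNReal.ofReal (2 * Real.pi))⁻¹ •
    (volume.restrict (Set.Ioc 0 (2 * Real.pi))).map Circle.exp

/-- The normalized Haar measure on the `d`-dimensional torus `𝕋^d`, i.e. the product of the
normalized Lebesgue (arc-length) measures on each circle factor. -/
noncomputable def torusHaar (d : ℕ) : Measure (Fin d → Circle) :=
  Measure.pi fun _ => circleHaar

/-!
The law of `S = z₁ + ⋯ + z_d` is invariant under rotations about the origin. Averaging `|Re (w S)|`
over all rotations `w` therefore gives `E |S| = π / 2 * E |Re S|`, which reduces the claim to the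
real i.i.d. variables `Re z_j`, of mean `0` and variance `1 / 2`. By the central limit theorem
`Re S / √d` converges in distribution to a centred Gaussian of variance `1 / 2`, and since its
second moments are bounded, its first absolute moments converge too, to
`√(2 * (1 / 2) / π) = 1 / √π`.
-/

open ProbabilityTheory Filter Topology
open scoped Real NNReal

section ConvergenceInDistribution

variable {Ω' E : Type*} {mΩ' : MeasurableSpace Ω'} {P' : Measure Ω'} [NormedAddCommGroup E]

theorem abs_integral_norm_sub_integral_min_norm_le [IsFiniteMeasure P']
    {X : Ω' → E} (hX : MemLp X 2 P') {M : ℝ} (hM : 0 < M) :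
    |∫ ω, ‖X ω‖ ∂P' - ∫ ω, min ‖X ω‖ M ∂P'| ≤ (∫ ω, ‖X ω‖ ^ 2 ∂P') / M := by
  have hnorm : Integrable (fun ω => ‖X ω‖) P' := (hX.integrable one_le_two).norm
  have hmin : Integrable (fun ω => min ‖X ω‖ M) P' := hnorm.inf (integrable_const M)
  rw [← integral_sub hnorm hmin, abs_of_nonneg (integral_nonneg fun ω => by simp), ← integral_div]
  refine integral_mono (hnorm.sub hmin) (hX.norm.integrable_sq.div_const M) fun ω => ?_
  rw [le_div_iff₀ hM]
  rcases le_total ‖X ω‖ M with hle | hge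
  · simp only [min_eq_left hle, sub_self, zero_mul]
    positivity
  · rw [min_eq_right hge]
    nlinarith

theorem tendsto_integral_min_norm_atTop {Z : Ω' → E} (hZ : Integrable Z P') :
    Tendsto (fun M : ℝ => ∫ ω, min ‖Z ω‖ M ∂P') atTop (𝓝 (∫ ω, ‖Z ω‖ ∂P')) := by
  refine tendsto_integral_filter_of_dominated_convergence (fun ω => ‖Z ω‖)
    (.of_forall fun M => hZ.aestronglyMeasurable.norm.inf aestronglyMeasurable_const)
    ?_ hZ.norm (.of_forall fun ω => ?_)
  · filter_upwards [eventually_ge_atTop 0] with M hM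
    refine .of_forall fun ω => ?_
    rw [Real.norm_of_nonneg (le_min (norm_nonneg _) hM)]
    exact min_le_left _ _
  · refine tendsto_const_nhds.congr' ?_
    filter_upwards [eventually_ge_atTop ‖Z ω‖] with M hM
    exact (min_eq_left hM).symm

variable {ι : Type*} {Ω : ι → Type*} {mΩ : ∀ i, MeasurableSpace (Ω i)}
  {P : ∀ i, Measure (Ω i)} [∀ i, IsProbabilityMeasure (P i)] [IsProbabilityMeasure P']
  [MeasurableSpace E] [OpensMeasurableSpace E]
  {X : ∀ i, Ω i → E} {Z : Ω' → E} {l : Filter ι}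

theorem tendsto_integral_min_norm_of_tendstoInDistribution
    (h : TendstoInDistribution X l Z P P') {M : ℝ} (hM : 0 ≤ M) :
    Tendsto (fun i => ∫ ω, min ‖X i ω‖ M ∂P i) l (𝓝 (∫ ω, min ‖Z ω‖ M ∂P')) := by
  have hcont : Continuous fun x : E => min ‖x‖ M := by fun_prop
  have hbound (x : E) : ‖min ‖x‖ M‖ ≤ M := by
    rw [Real.norm_of_nonneg (le_min (norm_nonneg x) hM)]
    exact min_le_right _ _
  have hweak := ProbabilityMeasure.tendsto_iff_forall_integral_tendsto.1 h.tendsto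
    (.ofNormedAddCommGroup _ hcont M hbound)
  simp only [ProbabilityMeasure.coe_mk, BoundedContinuousFunction.coe_ofNormedAddCommGroup] at hweak
  rw [integral_map h.aemeasurable_limit hcont.aestronglyMeasurable] at hweak
  refine hweak.congr fun i => ?_
  rw [integral_map (h.forall_aemeasurable i) hcont.aestronglyMeasurable]

-- Bounded second moments make the truncation error uniform in `i`, so that the limits in the
-- truncation level and in `i` may be exchanged.
theorem tendsto_integral_norm_of_tendstoInDistribution
    (h : TendstoInDistribution X l Z P P') (hX : ∀ i, MemLp (X i) 2 (P i)) {C : ℝ}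
    (hC : ∀ i, ∫ ω, ‖X i ω‖ ^ 2 ∂P i ≤ C) (hZ : Integrable Z P') :
    Tendsto (fun i => ∫ ω, ‖X i ω‖ ∂P i) l (𝓝 (∫ ω, ‖Z ω‖ ∂P')) := by
  have huniform : TendstoUniformly (fun (M : ℝ) i => ∫ ω, min ‖X i ω‖ M ∂P i)
      (fun i => ∫ ω, ‖X i ω‖ ∂P i) atTop := by
    rw [Metric.tendstoUniformly_iff]
    intro ε hε
    have hsmall : ∀ᶠ M : ℝ in atTop, C / M < ε :=
      (tendsto_const_nhds.div_atTop tendsto_id).eventually_lt_const hε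
    filter_upwards [hsmall, eventually_gt_atTop 0] with M hMε hM i
    calc dist (∫ ω, ‖X i ω‖ ∂P i) (∫ ω, min ‖X i ω‖ M ∂P i)
        ≤ (∫ ω, ‖X i ω‖ ^ 2 ∂P i) / M := abs_integral_norm_sub_integral_min_norm_le (hX i) hM
      _ ≤ C / M := by gcongr; exact hC i
      _ < ε := hMε
  refine huniform.tendsto_of_eventually_tendsto ?_ (tendsto_integral_min_norm_atTop hZ)
  filter_upwards [eventually_ge_atTop 0] with M hM
  exact tendsto_integral_min_norm_of_tendstoInDistribution h hM

end ConvergenceInDistribution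

section RealCLT

theorem integral_abs_gaussianReal (v : ℝ≥0) :
    ∫ x, |x| ∂gaussianReal 0 v = √(2 * v / π) := by
  rcases eq_or_ne v 0 with rfl | hv
  · simp
  have hmoment := integral_rpow_mul_exp_neg_mul_rpow (p := 2) (q := 1) (b := (2 * (v : ℝ))⁻¹)
    two_pos (by norm_num) (by positivity)
  have hexponent : (-(1 + 1) / 2 : ℝ) = -1 := by norm_num
  have hGamma : ((1 + 1) / 2 : ℝ) = 1 := by norm_num
  rw [hexponent, hGamma, Real.Gamma_one, Real.rpow_neg_one, inv_inv] at hmoment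
  calc ∫ x, |x| ∂gaussianReal 0 v
      = ∫ x, (√(2 * π * v))⁻¹ * (|x| * Real.exp (-(2 * (v : ℝ))⁻¹ * |x| ^ 2)) := by
        rw [integral_gaussianReal_eq_integral_smul hv]
        congr with x
        rw [gaussianPDFReal, smul_eq_mul, sub_zero, sq_abs, neg_mul, neg_div, div_eq_inv_mul,
          mul_assoc, mul_comm |x|]
    _ = (√(2 * π * v))⁻¹ *
          (2 * ∫ x : ℝ in Set.Ioi 0, x ^ (1 : ℝ) * Real.exp (-(2 * (v : ℝ))⁻¹ * x ^ (2 : ℝ))) := by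
        simp only [Real.rpow_one, Real.rpow_two]
        rw [integral_const_mul,
          integral_comp_abs (f := fun x => x * Real.exp (-(2 * (v : ℝ))⁻¹ * x ^ 2))]
    _ = √(2 * v / π) := by
        rw [hmoment, eq_comm, Real.sqrt_eq_iff_mul_self_eq (by positivity) (by positivity)]
        field_simp
        rw [Real.sq_sqrt (by positivity)]

variable {Ω : Type*} {mΩ : MeasurableSpace Ω} {P : Measure Ω} {X : ℕ → Ω → ℝ}

theorem variance_sum_range_of_identDistrib (hX : MemLp (X 0) 2 P) (hindep : iIndepFun X P)
    (hident : ∀ i, IdentDistrib (X i) (X 0) P P) (n : ℕ) :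
    Var[fun ω => ∑ k ∈ Finset.range n, X k ω; P] = n * Var[X 0; P] := by
  have hsum := IndepFun.variance_sum (s := Finset.range n)
    (fun k _ => (hident k).memLp_iff.2 hX) (fun _ _ _ _ hij => hindep.indepFun hij)
  simpa only [Finset.sum_fn, (hident _).variance_eq, Finset.sum_const, Finset.card_range,
    nsmul_eq_mul] using hsum

variable [IsProbabilityMeasure P]

theorem integral_sq_inv_sqrt_mul_sum_sub_le (hX : MemLp (X 0) 2 P) (hindep : iIndepFun X P)
    (hident : ∀ i, IdentDistrib (X i) (X 0) P P) (n : ℕ) :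
    ∫ ω, ((√n)⁻¹ * (∑ k ∈ Finset.range n, X k ω - n * P[X 0])) ^ 2 ∂P ≤ Var[X 0; P] := by
  have hL2 (k : ℕ) : MemLp (X k) 2 P := (hident k).memLp_iff.2 hX
  have hmean : ∫ ω, ∑ k ∈ Finset.range n, X k ω ∂P = n * P[X 0] := by
    rw [integral_finsetSum _ fun k _ => (hL2 k).integrable one_le_two]
    simp only [(hident _).integral_eq, Finset.sum_const, Finset.card_range, nsmul_eq_mul]
  have hvar : ∫ ω, (∑ k ∈ Finset.range n, X k ω - n * P[X 0]) ^ 2 ∂P = n * Var[X 0; P] := by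
    rw [← hmean, ← variance_eq_integral
      (Finset.aemeasurable_fun_sum _ fun k _ => (hL2 k).aestronglyMeasurable.aemeasurable),
      variance_sum_range_of_identDistrib hX hindep hident]
  simp only [mul_pow, integral_const_mul, inv_pow, Real.sq_sqrt (Nat.cast_nonneg n), hvar]
  rw [← mul_assoc]
  exact mul_le_of_le_one_left (variance_nonneg _ _) inv_mul_le_one

theorem tendsto_integral_abs_inv_sqrt_mul_sum_sub (hX : MemLp (X 0) 2 P)
    (hindep : iIndepFun X P) (hident : ∀ i, IdentDistrib (X i) (X 0) P P) :
    Tendsto (fun n : ℕ => ∫ ω, |(√n)⁻¹ * (∑ k ∈ Finset.range n, X k ω - n * P[X 0])| ∂P)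
      atTop (𝓝 √(2 * Var[X 0; P] / π)) := by
  have hL2 (n : ℕ) : MemLp (fun ω => (√n)⁻¹ * (∑ k ∈ Finset.range n, X k ω - n * P[X 0])) 2 P :=
    ((memLp_finsetSum _ fun k _ => (hident k).memLp_iff.2 hX).sub (memLp_const _)).const_mul _
  have hclt := tendstoInDistribution_inv_sqrt_mul_sum_sub (Y := id) .id hX hindep hident
  have hlim := tendsto_integral_norm_of_tendstoInDistribution hclt hL2
    (fun n => by
      simpa only [Real.norm_eq_abs, sq_abs] using
        integral_sq_inv_sqrt_mul_sum_sub_le hX hindep hident n)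
    ((memLp_id_gaussianReal 1).integrable le_rfl)
  simpa only [Real.norm_eq_abs, id, integral_abs_gaussianReal,
    Real.coe_toNNReal _ (variance_nonneg _ _)] using hlim

end RealCLT

section CircleHaar

local instance fact_zero_lt_two_pi : Fact (0 < 2 * π) := ⟨Real.two_pi_pos⟩

theorem measurePreserving_homeomorphCircle' :
    MeasurePreserving AddCircle.homeomorphCircle' AddCircle.haarAddCircle circleHaar := by
  have hmeas : Measurable (AddCircle.homeomorphCircle' : AddCircle (2 * π) → Circle) :=
    AddCircle.homeomorphCircle'.continuous.measurable
  refine ⟨hmeas, ?_⟩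
  have hmk := (AddCircle.measurePreserving_mk (2 * π) 0).map_eq
  rw [zero_add] at hmk
  have hvol : (AddCircle.haarAddCircle : Measure (AddCircle (2 * π))) =
      (ENNReal.ofReal (2 * π))⁻¹ • volume := by
    rw [AddCircle.volume_eq_smul_haarAddCircle, smul_smul, ENNReal.inv_mul_cancel, one_smul]
    · simp [Real.pi_pos]
    · exact ENNReal.ofReal_ne_top
  rw [hvol, Measure.map_smul, ← hmk, Measure.map_map hmeas AddCircle.measurable_mk']
  rfl

instance isProbabilityMeasure_circleHaar : IsProbabilityMeasure circleHaar :=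
  measurePreserving_homeomorphCircle'.map_eq ▸
    Measure.isProbabilityMeasure_map measurePreserving_homeomorphCircle'.aemeasurable

instance isMulLeftInvariant_circleHaar : circleHaar.IsMulLeftInvariant := by
  refine ⟨fun a => ?_⟩
  obtain ⟨α, rfl⟩ := AddCircle.homeomorphCircle'.surjective a
  have hadd (β : AddCircle (2 * π)) : AddCircle.homeomorphCircle' (α + β) =
      AddCircle.homeomorphCircle' α * AddCircle.homeomorphCircle' β := by
    induction α, β using Quotient.inductionOn₂ with
    | _ s t => exact Circle.exp_add s t
  have hshift := measurePreserving_homeomorphCircle'.comp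
    (measurePreserving_add_left (AddCircle.haarAddCircle (T := 2 * π)) α)
  rw [← measurePreserving_homeomorphCircle'.map_eq, Measure.map_map (by fun_prop)
    measurePreserving_homeomorphCircle'.measurable, measurePreserving_homeomorphCircle'.map_eq,
    ← hshift.map_eq]
  congr 1 with β
  rw [Function.comp_apply, Function.comp_apply, hadd]

theorem integral_circleHaar {E : Type*} [NormedAddCommGroup E] [NormedSpace ℝ E]
    (f : Circle → E) (t : ℝ) :
    ∫ z, f z ∂circleHaar = (2 * π)⁻¹ • ∫ θ in t..t + 2 * π, f (Circle.exp θ) := by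
  rw [← measurePreserving_homeomorphCircle'.integral_comp
      AddCircle.homeomorphCircle'.measurableEmbedding, AddCircle.integral_haarAddCircle,
    ← AddCircle.intervalIntegral_preimage (2 * π) t]
  rfl

theorem intervalIntegral_abs_cos_add_two_pi (t : ℝ) : ∫ θ in t..t + 2 * π, |Real.cos θ| = 4 := by
  have hperiodic : Function.Periodic (fun θ => |Real.cos θ|) π := fun θ => by
    simp only [Real.cos_add_pi, abs_neg]
  have hhalf : ∫ θ in -(π / 2)..π / 2, |Real.cos θ| = 2 := by
    rw [intervalIntegral.integral_congr (g := Real.cos), integral_cos, Real.sin_neg,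
      Real.sin_pi_div_two]
    · norm_num
    intro θ hθ
    rw [Set.uIcc_of_le (by linarith [Real.pi_pos])] at hθ
    exact abs_of_nonneg (Real.cos_nonneg_of_mem_Icc hθ)
  have htwo := hperiodic.intervalIntegral_add_zsmul_eq 2 t
    fun _ _ => Real.continuous_cos.abs.intervalIntegrable _ _
  rw [hperiodic.intervalIntegral_add_eq t (-(π / 2)), show -(π / 2) + π = π / 2 by ring, hhalf,
    zsmul_eq_mul, zsmul_eq_mul, Int.cast_ofNat] at htwo
  exact htwo.trans (by norm_num)

theorem integral_abs_re_mul_circleHaar (c : ℂ) :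
    ∫ w : Circle, |((w : ℂ) * c).re| ∂circleHaar = 2 / π * ‖c‖ := by
  have hre : ∫ w : Circle, |(w : ℂ).re| ∂circleHaar = 2 / π := by
    simp only [integral_circleHaar _ 0, Circle.coe_exp, Complex.exp_ofReal_mul_I_re,
      intervalIntegral_abs_cos_add_two_pi]
    rw [smul_eq_mul]
    field_simp
    norm_num
  have hpolar (w : Circle) :
      |((w : ℂ) * c).re| = |((w * Circle.exp c.arg : Circle) : ℂ).re| * ‖c‖ := by
    conv_lhs => rw [← Complex.norm_mul_exp_arg_mul_I c]
    rw [mul_left_comm, Complex.re_ofReal_mul, abs_mul, abs_norm, mul_comm, Circle.coe_mul,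
      Circle.coe_exp]
  simp only [hpolar, integral_mul_const]
  rw [integral_mul_right_eq_self (μ := circleHaar) (fun w : Circle => |(w : ℂ).re|), hre]

end CircleHaar

section CircularSymmetry

variable {Ω : Type*} {mΩ : MeasurableSpace Ω}

/-- A complex random variable is circularly symmetric if its law is invariant under all rotations
about the origin; `IdentDistrib` makes it a.e. measurable as well. -/
def IsCircularlySymmetric (Z : Ω → ℂ) (P : Measure Ω) : Prop :=
  ∀ w : Circle, IdentDistrib (fun ω => (w : ℂ) * Z ω) Z P P

theorem isCircularlySymmetric_coe_circleHaar :
    IsCircularlySymmetric (fun z : Circle => (z : ℂ)) circleHaar := by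
  intro w
  have hrot : IdentDistrib (fun z => w * z) id circleHaar circleHaar :=
    (measurePreserving_mul_left circleHaar w).hasLaw.identDistrib .id
  exact hrot.comp (u := fun z : Circle => (z : ℂ)) (by fun_prop)

namespace IsCircularlySymmetric

variable {P : Measure Ω} {Z : Ω → ℂ}

protected theorem aemeasurable (hZ : IsCircularlySymmetric Z P) : AEMeasurable Z P :=
  (hZ 1).aemeasurable_snd

theorem of_identDistrib {Ω' : Type*} [MeasurableSpace Ω'] {P' : Measure Ω'} {Y : Ω' → ℂ}
    (hZ : IsCircularlySymmetric Z P) (hYZ : IdentDistrib Y Z P' P) :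
    IsCircularlySymmetric Y P' := fun w =>
  (hYZ.comp (measurable_const_mul (w : ℂ))).trans ((hZ w).trans hYZ.symm)

theorem integral_re (hZ : IsCircularlySymmetric Z P) : ∫ ω, (Z ω).re ∂P = 0 := by
  have hneg : -∫ ω, (Z ω).re ∂P = ∫ ω, (Z ω).re ∂P := by
    simpa [integral_neg] using ((hZ (-1)).comp Complex.measurable_re).integral_eq
  linarith

theorem integral_re_sq (hZ : IsCircularlySymmetric Z P) (hL2 : MemLp Z 2 P) :
    ∫ ω, (Z ω).re ^ 2 ∂P = (∫ ω, ‖Z ω‖ ^ 2 ∂P) / 2 := by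
  have hquarter : ∫ ω, (Z ω).im ^ 2 ∂P = ∫ ω, (Z ω).re ^ 2 ∂P := by
    have hrot := ((hZ (Circle.exp (π / 2))).comp Complex.measurable_re).sq.integral_eq
    simpa [Function.comp_def, Complex.exp_pi_div_two_mul_I] using hrot
  have hsum : ∫ ω, ‖Z ω‖ ^ 2 ∂P = ∫ ω, (Z ω).re ^ 2 ∂P + ∫ ω, (Z ω).im ^ 2 ∂P := by
    have hre : MemLp (fun ω => (Z ω).re) 2 P := hL2.re
    have him : MemLp (fun ω => (Z ω).im) 2 P := hL2.im
    rw [← integral_add hre.integrable_sq him.integrable_sq]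
    simp only [Complex.sq_norm, Complex.normSq_apply, ← sq]
  rw [hsum, hquarter]
  ring

-- Average `|Re (w Z)|` over both the rotation `w` and `Z`: integrating over `w` first gives
-- `2 / π * ‖Z‖` pointwise, integrating over `Z` first removes the dependence on `w`.
theorem integral_norm [SFinite P] (hZ : IsCircularlySymmetric Z P) (hint : Integrable Z P) :
    ∫ ω, ‖Z ω‖ ∂P = π / 2 * ∫ ω, |(Z ω).re| ∂P := by
  have hrot (w : Circle) : ∫ ω, |((w : ℂ) * Z ω).re| ∂P = ∫ ω, |(Z ω).re| ∂P :=
    ((hZ w).comp Complex.measurable_re.abs).integral_eq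
  have hprod : Integrable (fun p : Circle × Ω => |((p.1 : ℂ) * Z p.2).re|)
      (circleHaar.prod P) := by
    have hmeas : AEMeasurable (fun p : Circle × Ω => |((p.1 : ℂ) * Z p.2).re|)
        (circleHaar.prod P) :=
      (Complex.measurable_re.comp_aemeasurable
        (AEMeasurable.mul (by fun_prop) hZ.aemeasurable.comp_snd)).abs
    refine (hint.comp_snd circleHaar).mono hmeas.aestronglyMeasurable (.of_forall fun p => ?_)
    rw [Real.norm_eq_abs, abs_abs]
    refine (Complex.abs_re_le_norm _).trans_eq ?_
    rw [norm_mul, Circle.norm_coe, one_mul]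
  have hswap := integral_integral_swap (f := fun (w : Circle) ω => |((w : ℂ) * Z ω).re|) hprod
  simp only [hrot, integral_abs_re_mul_circleHaar, integral_const_mul, integral_const,
    probReal_univ, one_smul] at hswap
  rw [hswap]
  field_simp

protected theorem sum {ι : Type*} {X : ι → Ω → ℂ} (hindep : iIndepFun X P) {s : Finset ι}
    (hX : ∀ i ∈ s, IsCircularlySymmetric (X i) P) :
    IsCircularlySymmetric (fun ω => ∑ i ∈ s, X i ω) P := by
  intro w
  have hjoint := IdentDistrib.pi (fun i : s => hX i i.2 w)
    ((hindep.restrict s).comp (fun _ z => (w : ℂ) * z) fun _ => by fun_prop) (hindep.restrict s)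
  have hsum := hjoint.comp (u := fun x : s → ℂ => ∑ i, x i) (by fun_prop)
  have hcoe (Y : ι → Ω → ℂ) : (fun x : s → ℂ => ∑ i, x i) ∘ (fun ω (i : s) => Y i ω) =
      fun ω => ∑ i ∈ s, Y i ω := funext fun ω => Finset.sum_coe_sort s fun i => Y i ω
  simpa only [Finset.mul_sum] using hcoe X ▸ hcoe (fun i ω => (w : ℂ) * X i ω) ▸ hsum

end IsCircularlySymmetric

end CircularSymmetry

section CircularlySymmetricCLT

variable {Ω : Type*} {mΩ : MeasurableSpace Ω}

theorem tendsto_integral_norm_sum_div_sqrt {P : Measure Ω} [IsProbabilityMeasure P]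
    {X : ℕ → Ω → ℂ} (hsymm : IsCircularlySymmetric (X 0) P) (hL2 : MemLp (X 0) 2 P)
    (hindep : iIndepFun X P) (hident : ∀ i, IdentDistrib (X i) (X 0) P P) :
    Tendsto (fun n : ℕ => ∫ ω, ‖∑ k ∈ Finset.range n, X k ω‖ / √n ∂P) atTop
      (𝓝 (√π / 2 * √(∫ ω, ‖X 0 ω‖ ^ 2 ∂P))) := by
  have hL2re : MemLp (fun ω => (X 0 ω).re) 2 P := hL2.re
  have hvar : Var[fun ω => (X 0 ω).re; P] = (∫ ω, ‖X 0 ω‖ ^ 2 ∂P) / 2 := by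
    rw [variance_of_integral_eq_zero hL2re.aestronglyMeasurable.aemeasurable hsymm.integral_re,
      hsymm.integral_re_sq hL2]
  have hclt := tendsto_integral_abs_inv_sqrt_mul_sum_sub hL2re
    (hindep.comp (fun _ => Complex.re) fun _ => Complex.measurable_re)
    fun i => (hident i).comp Complex.measurable_re
  have hlimit : π / 2 * √(2 * ((∫ ω, ‖X 0 ω‖ ^ 2 ∂P) / 2) / π) =
      √π / 2 * √(∫ ω, ‖X 0 ω‖ ^ 2 ∂P) := by
    rw [mul_div_cancel₀ _ two_ne_zero, Real.sqrt_div' _ Real.pi_nonneg]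
    field_simp
    rw [Real.sq_sqrt Real.pi_nonneg, mul_comm]
  rw [← hlimit, ← hvar]
  refine (hclt.const_mul (π / 2)).congr fun n => ?_
  have hsum := IsCircularlySymmetric.sum hindep (s := Finset.range n)
    fun k _ => hsymm.of_identDistrib (hident k)
  have hint : Integrable (fun ω => ∑ k ∈ Finset.range n, X k ω) P :=
    integrable_finsetSum _ fun k _ => ((hident k).memLp_iff.2 hL2).integrable one_le_two
  rw [integral_div, hsum.integral_norm hint]
  simp only [Function.comp_apply, hsymm.integral_re, mul_zero, sub_zero, ← Complex.re_sum, abs_mul,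
    abs_of_nonneg (inv_nonneg.2 (Real.sqrt_nonneg _)), integral_const_mul]
  ring

theorem steinhaus_clt_L1_general {P : Measure Ω} [IsProbabilityMeasure P] {Z : Ω → ℂ}
    (hsymm : IsCircularlySymmetric Z P) (hL2 : MemLp Z 2 P) :
    Tendsto (fun d : ℕ => ∫ x : Fin d → Ω, ‖∑ j, Z (x j)‖ / √d ∂Measure.pi fun _ => P) atTop
      (𝓝 (√π / 2 * √(∫ ω, ‖Z ω‖ ^ 2 ∂P))) := by
  obtain ⟨Ω', _, P', Y, -, hY, hindep, _⟩ := exists_iid ℕ P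
  have hZ : AEMeasurable Z P := hsymm.aemeasurable
  have hident (i : ℕ) : IdentDistrib (Z ∘ Y i) Z P' P :=
    (HasLaw.comp ⟨hZ, rfl⟩ (hY i)).identDistrib ⟨hZ, rfl⟩
  have hclt := tendsto_integral_norm_sum_div_sqrt (hsymm.of_identDistrib (hident 0))
    ((hident 0).memLp_iff.2 hL2)
    (hindep.comp₀ (fun _ => Z) (fun i => (hY i).aemeasurable) fun i => by rwa [(hY i).map_eq])
    fun i => (hident i).trans (hident 0).symm
  have hnorm : ∫ ω, ‖(Z ∘ Y 0) ω‖ ^ 2 ∂P' = ∫ ω, ‖Z ω‖ ^ 2 ∂P := (hident 0).norm.sq.integral_eq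
  rw [hnorm] at hclt
  refine hclt.congr fun d => ?_
  have hlaw : HasLaw (fun ω (j : Fin d) => Y j ω) (Measure.pi fun _ => P) P' :=
    (hindep.precomp Fin.val_injective).hasLaw_pi fun j => hY j
  have hcoord (j : Fin d) : AEMeasurable (fun x : Fin d → Ω => Z (x j)) (Measure.pi fun _ => P) :=
    hZ.comp_quasiMeasurePreserving (Measure.quasiMeasurePreserving_eval _ j)
  have hnorm_sum : AEMeasurable (fun x : Fin d → Ω => ‖∑ j, Z (x j)‖ / √d)
      (Measure.pi fun _ => P) :=
    (Finset.aemeasurable_fun_sum _ fun j _ => hcoord j).norm.div_const _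
  rw [← hlaw.integral_comp hnorm_sum.aestronglyMeasurable]
  simp only [Function.comp_apply, Finset.sum_range]

end CircularlySymmetricCLT

/-- Central limit theorem in L¹ for Steinhaus variables: the integral of
`|z₁ + ⋯ + z_d|/√d` over the torus `𝕋^d` with respect to the normalized Haar
measure tends to `√π/2` as `d → ∞`. -/
theorem steinhaus_clt_L1 :
    Filter.Tendsto
      (fun d : ℕ => ∫ z : Fin d → Circle, ‖∑ j, (z j : ℂ)‖ / Real.sqrt d ∂(torusHaar d))
      Filter.atTop (nhds (Real.sqrt Real.pi / 2)) := by
  have hL2 : MemLp (fun z : Circle => (z : ℂ)) 2 circleHaar :=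
    .of_bound (by fun_prop) 1 (.of_forall fun z => (Circle.norm_coe z).le)
  simpa only [torusHaar, Circle.norm_coe, one_pow, integral_const, probReal_univ, one_smul,
    Real.sqrt_one, mul_one] using
    steinhaus_clt_L1_general isCircularlySymmetric_coe_circleHaar hL2
end

section
/- Let d ≥ 1, let m be the normalized Haar measure on 𝕋^d, and let b = (b₁, …, b_d) ∈ ℂ^d. Then ∫_{𝕋^d} |b₁ z₁ + b₂ z₂ + ⋯ + b_d z_d| dm(z) ≥ (√π/2) · (|b₁|² + ⋯ + |b_d|²)^{1/2}. (This is the sharp Khintchine inequality for Steinhaus variables at exponent 1.) -/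
open MeasureTheory

/-!
As `∫ (1 - cos (t * x)) / t ^ 2 = |x| * π / 2` over `t > 0`, rotation invariance gives the first
moment of the Steinhaus sum `S = ∑ b j * z j` as `∫ (1 - ∏ J₀(t * ‖b j‖)) / t ^ 2`, with `J₀` the
Bessel function. Normalize `∑ ‖b j‖ ^ 2 = 1`.

If `2 * ‖b k‖ ^ 2 ≤ 1` for all `k`, weighted AM-GM with weights `‖b j‖ ^ 2` replaces the product by
the powers `(J₀ ^ 2) ^ σ` with `σ = 1 / (2 * ‖b j‖ ^ 2) ≥ 1`, and it remains to see that such a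
power gives an integral at least as large as the Gaussian `exp (-σ * x ^ 2 / 2)` does. For `σ = 1`
both integrals are known, being `4 / π > √(π / 2)`. Convexity of `y ↦ y ^ σ` turns the difference
for `σ = 1` into a lower bound for the difference for `σ`, up to an error supported where `|J₀|` is
small, which the gap `4 / π - √(π / 2)` absorbs.

If some `b k` has `2 * ‖b k‖ ^ 2 > 1`, write `S = z k * b k + W`. The mean of `‖S‖ / ‖b k‖` over
`z k` is at least a quartic polynomial in `‖W‖ / ‖b k‖`, and the second and fourth moments of `W`
finish the proof.
-/

namespace Steinhaus

open Real Set Filter Topology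

/-! ### The Haar measure of the circle -/

instance : IsProbabilityMeasure circleHaar := by
  have hexp : Measurable Circle.exp := Circle.exp.continuous.measurable
  refine ⟨?_⟩
  rw [circleHaar, Measure.smul_apply, Measure.map_apply hexp MeasurableSet.univ]
  simp only [preimage_univ, Measure.restrict_apply_univ, volume_Ioc, sub_zero, smul_eq_mul]
  exact ENNReal.inv_mul_cancel (by simp [pi_pos]) ENNReal.ofReal_ne_top

theorem integrable_of_continuous {X E : Type*} [TopologicalSpace X]
    [CompactSpace X] [MeasurableSpace X] [OpensMeasurableSpace X] {μ : Measure X}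
    [IsFiniteMeasure μ] [NormedAddCommGroup E] {f : X → E} (hf : Continuous f) :
    Integrable f μ :=
  hf.integrable_of_hasCompactSupport (HasCompactSupport.of_compactSpace f)

theorem integral_circleHaar {E : Type*} [NormedAddCommGroup E] [NormedSpace ℝ E]
    {f : Circle → E} (hf : Continuous f) :
    ∫ u, f u ∂circleHaar = (2 * π)⁻¹ • ∫ θ in (0 : ℝ)..2 * π, f (Circle.exp θ) := by
  have hexp : Measurable Circle.exp := Circle.exp.continuous.measurable
  rw [circleHaar, integral_smul_measure,
    integral_map hexp.aemeasurable hf.aestronglyMeasurable,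
    intervalIntegral.integral_of_le two_pi_pos.le, ENNReal.toReal_inv,
    ENNReal.toReal_ofReal two_pi_pos.le]

instance : circleHaar.IsMulLeftInvariant := by
  refine ⟨fun v => ?_⟩
  have hv : Continuous fun u : Circle => v * u := continuous_const_mul v
  have := Measure.isProbabilityMeasure_map hv.measurable.aemeasurable (μ := circleHaar)
  refine ext_of_forall_integral_eq_of_IsFiniteMeasure fun f => ?_
  obtain ⟨t, rfl⟩ := Circle.exp_surjective v
  have hperiodic : Function.Periodic (fun θ => f (Circle.exp θ)) (2 * π) := fun θ => by
    simp only [Circle.periodic_exp θ]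
  rw [integral_map hv.measurable.aemeasurable f.continuous.aestronglyMeasurable,
    integral_circleHaar (f := fun u => f (_ * u)) (f.continuous.comp hv),
    integral_circleHaar f.continuous]
  simp_rw [← Circle.exp_add]
  rw [intervalIntegral.integral_comp_add_left (fun θ => f (Circle.exp θ)) t]
  simpa using congrArg ((2 * π)⁻¹ • ·) (hperiodic.intervalIntegral_add_eq t 0)

theorem integral_circleHaar_mul_eq_norm {E : Type*} [NormedAddCommGroup E] [NormedSpace ℝ E]
    (f : ℂ → E) (c : ℂ) :
    ∫ u : Circle, f (u * c) ∂circleHaar = ∫ u : Circle, f (u * ‖c‖) ∂circleHaar := by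
  rw [← integral_mul_right_eq_self (fun u : Circle => f (u * ‖c‖)) (Circle.exp c.arg)]
  simp only [Circle.coe_mul, Circle.coe_exp, mul_assoc, mul_comm (Complex.exp _),
    Complex.norm_mul_exp_arg_mul_I]

theorem integral_circleHaar_eq_zero_of_odd {f : ℂ → ℝ} (hf : ∀ z, f (-z) = -f z) (c : ℂ) :
    ∫ u : Circle, f (u * c) ∂circleHaar = 0 := by
  have h := integral_mul_left_eq_self (μ := circleHaar) (fun u : Circle => f (u * c)) (-1)
  simp only [neg_mul, one_mul, Circle.coe_neg, hf, integral_neg] at h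
  linarith

theorem integral_circleHaar_re_pow (k : ℕ) :
    ∫ u : Circle, (u : ℂ).re ^ (2 * k) ∂circleHaar = k.centralBinom / 4 ^ k := by
  induction k with
  | zero => simp
  | succ k ih =>
    have hcont (n : ℕ) : Continuous fun u : Circle => (u : ℂ).re ^ n := by fun_prop
    have hrec := integral_cos_pow (a := 0) (b := 2 * π) (2 * k)
    have hbinom : ((k : ℝ) + 1) * (k + 1).centralBinom = 2 * (2 * k + 1) * k.centralBinom :=
      mod_cast k.succ_mul_centralBinom_succ
    rw [integral_circleHaar (hcont _)] at ih ⊢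
    simp only [Circle.coe_exp, Complex.exp_ofReal_mul_I_re, sin_two_pi, sin_zero, mul_zero,
      sub_zero, zero_div, zero_add, smul_eq_mul] at ih hrec ⊢
    rw [mul_add, mul_one, hrec, mul_left_comm, ih]
    push_cast
    field_simp
    linear_combination (-2) * 4 ^ k * hbinom

theorem integral_circleHaar_abs_re (c : ℂ) :
    ∫ u : Circle, |(u * c).re| ∂circleHaar = 2 / π * ‖c‖ := by
  have habs_cos : ∫ θ in (0 : ℝ)..2 * π, |cos θ| = 4 := by
    have hperiodic : Function.Periodic (fun θ => |cos θ|) π := fun θ => by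
      simp only [cos_add_pi, abs_neg]
    have hhalf : ∫ θ in -(π / 2)..π / 2, |cos θ| = 2 := by
      rw [intervalIntegral.integral_congr (g := cos), integral_cos]
      · norm_num
      · intro θ hθ
        rw [uIcc_of_le (by linarith [pi_pos])] at hθ
        exact abs_of_nonneg (cos_nonneg_of_mem_Icc hθ)
    have hshift := hperiodic.intervalIntegral_add_eq (-(π / 2)) 0
    have htwice := hperiodic.intervalIntegral_add_zsmul_eq 2 0
      fun _ _ => continuous_cos.abs.intervalIntegrable _ _
    rw [show -(π / 2) + π = π / 2 by ring, hhalf] at hshift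
    rw [zsmul_eq_mul, zsmul_eq_mul, ← hshift, zero_add] at htwice
    norm_num at htwice
    exact htwice
  rw [integral_circleHaar_mul_eq_norm (fun z => |z.re|)]
  simp only [Complex.re_mul_ofReal, abs_mul, abs_norm]
  rw [integral_mul_const, integral_circleHaar (by fun_prop)]
  simp only [Circle.coe_exp, Complex.exp_ofReal_mul_I_re, habs_cos, smul_eq_mul]
  field_simp
  norm_num

/-! ### Steinhaus sums -/

section SteinhausSum

/-- The Steinhaus sum `∑ j ∈ s, b j * z j`, a random variable on the torus. Keeping the set `s` of
summands as a parameter allows inductions that peel off one coordinate at a time. -/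
noncomputable def steinhausSum {ι : Type*} (b : ι → ℂ) (s : Finset ι) (z : ι → Circle) : ℂ :=
  ∑ j ∈ s, b j * z j

@[fun_prop]
theorem continuous_steinhausSum {ι : Type*} (b : ι → ℂ) (s : Finset ι) :
    Continuous (steinhausSum b s) := by
  unfold steinhausSum
  fun_prop

/-- The normalized Haar measure on the torus `𝕋^ι` over an arbitrary finite index set `ι`. -/
noncomputable abbrev torusMeasure (ι : Type*) [Fintype ι] : Measure (ι → Circle) :=
  Measure.pi fun _ => circleHaar

variable {ι : Type*} [Fintype ι]

theorem integral_torusMeasure_eq_integral_rotate {w : Circle → ι → Circle} (hw : Continuous w)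
    {F : (ι → Circle) → ℝ} (hF : Continuous F) :
    ∫ z, F z ∂torusMeasure ι = ∫ z, ∫ u, F (w u * z) ∂circleHaar ∂torusMeasure ι := by
  rw [integral_integral_swap (integrable_of_continuous (by fun_prop))]
  simp only [integral_mul_left_eq_self, integral_const, probReal_univ, one_smul]

theorem integral_steinhausSum_insert [DecidableEq ι] (b : ι → ℂ) {s : Finset ι} {a : ι}
    (ha : a ∉ s) {F : ℂ → ℝ} (hF : Continuous F) :
    ∫ z, F (steinhausSum b (insert a s) z) ∂torusMeasure ι =
      ∫ z, ∫ u : Circle, F (u * b a + steinhausSum b s z) ∂circleHaar ∂torusMeasure ι := by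
  rw [integral_torusMeasure_eq_integral_rotate (w := fun u => Pi.mulSingle a u)
    (continuous_mulSingle (A := fun _ => Circle) a)
    (F := fun z => F (steinhausSum b (insert a s) z)) (by fun_prop)]
  refine integral_congr_ae (.of_forall fun z => ?_)
  have hrest (u : Circle) : steinhausSum b s (Pi.mulSingle a u * z) = steinhausSum b s z :=
    Finset.sum_congr rfl fun j hj => by
      rw [Pi.mul_apply, Pi.mulSingle_eq_of_ne (ne_of_mem_of_not_mem hj ha), one_mul]
  have hpeel (u : Circle) : steinhausSum b (insert a s) (Pi.mulSingle a u * z) =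
      (u * z a : Circle) * b a + steinhausSum b s z := by
    rw [← hrest u, steinhausSum, Finset.sum_insert ha, Pi.mul_apply, Pi.mulSingle_eq_same,
      mul_comm (b a), steinhausSum]
  simp only [hpeel]
  exact integral_mul_right_eq_self (fun u : Circle => F (u * b a + steinhausSum b s z)) (z a)

theorem integral_abs_re_steinhausSum (b : ι → ℂ) (s : Finset ι) :
    ∫ z, |(steinhausSum b s z).re| ∂torusMeasure ι =
      2 / π * ∫ z, ‖steinhausSum b s z‖ ∂torusMeasure ι := by
  have hrotate (u : Circle) (z : ι → Circle) :
      steinhausSum b s ((fun _ => u) * z) = u * steinhausSum b s z := by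
    simp only [steinhausSum, Finset.mul_sum, Pi.mul_apply, Circle.coe_mul, mul_left_comm]
  rw [integral_torusMeasure_eq_integral_rotate (w := fun u _ => u) (by fun_prop) (by fun_prop)]
  simp only [hrotate, integral_circleHaar_abs_re, integral_const_mul]

theorem norm_circle_mul_add_sq (u : Circle) (c w : ℂ) :
    ‖u * c + w‖ ^ 2 = ‖c‖ ^ 2 + ‖w‖ ^ 2 + 2 * (u * (c * star w)).re := by
  rw [← Complex.normSq_eq_norm_sq, Complex.normSq_add, Complex.normSq_eq_norm_sq,
    Complex.normSq_eq_norm_sq, norm_mul, Circle.norm_coe, one_mul, mul_assoc, Complex.star_def]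

theorem integral_circleHaar_norm_mul_add_sq (c w : ℂ) :
    ∫ u : Circle, ‖u * c + w‖ ^ 2 ∂circleHaar = ‖c‖ ^ 2 + ‖w‖ ^ 2 := by
  simp only [norm_circle_mul_add_sq]
  rw [integral_add (integrable_const _) (integrable_of_continuous (by fun_prop)),
    integral_const_mul, integral_circleHaar_eq_zero_of_odd (f := Complex.re) Complex.neg_re]
  simp only [integral_const, probReal_univ, one_smul, mul_zero, add_zero]

theorem integral_circleHaar_re_sq (c : ℂ) :
    ∫ u : Circle, (u * c).re ^ 2 ∂circleHaar = ‖c‖ ^ 2 / 2 := by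
  have hsq := integral_circleHaar_re_pow 1
  rw [integral_circleHaar_mul_eq_norm (fun z => z.re ^ 2)]
  simp only [mul_one, Complex.re_mul_ofReal, mul_pow] at hsq ⊢
  rw [integral_mul_const, hsq, Nat.centralBinom_eq_two_mul_choose]
  norm_num
  ring

theorem integral_circleHaar_norm_mul_add_pow_four (c w : ℂ) :
    ∫ u : Circle, ‖u * c + w‖ ^ 4 ∂circleHaar =
      ‖c‖ ^ 4 + 4 * ‖c‖ ^ 2 * ‖w‖ ^ 2 + ‖w‖ ^ 4 := by
  have hexpand (u : Circle) : ‖u * c + w‖ ^ 4 = (‖c‖ ^ 2 + ‖w‖ ^ 2) ^ 2 +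
      4 * (‖c‖ ^ 2 + ‖w‖ ^ 2) * (u * (c * star w)).re + 4 * (u * (c * star w)).re ^ 2 := by
    rw [show (4 : ℕ) = 2 * 2 from rfl, pow_mul, norm_circle_mul_add_sq]
    ring
  simp only [hexpand]
  rw [integral_add (integrable_of_continuous (by fun_prop)) (integrable_of_continuous
    (by fun_prop)), integral_add (integrable_const _) (integrable_of_continuous (by fun_prop)),
    integral_const_mul, integral_const_mul, integral_circleHaar_re_sq,
    integral_circleHaar_eq_zero_of_odd (f := Complex.re) Complex.neg_re, norm_mul, norm_star]
  simp only [integral_const, probReal_univ, one_smul]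
  ring

theorem integral_norm_steinhausSum_sq (b : ι → ℂ) (s : Finset ι) :
    ∫ z, ‖steinhausSum b s z‖ ^ 2 ∂torusMeasure ι = ∑ j ∈ s, ‖b j‖ ^ 2 := by
  classical
  induction s using Finset.induction_on with
  | empty => simp [steinhausSum]
  | insert a s ha ih =>
    rw [integral_steinhausSum_insert b ha (F := fun w => ‖w‖ ^ 2) (by fun_prop)]
    simp only [integral_circleHaar_norm_mul_add_sq]
    rw [integral_add (integrable_const _) (integrable_of_continuous (by fun_prop)), ih,
      Finset.sum_insert ha]
    simp only [integral_const, probReal_univ, one_smul]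

theorem integral_norm_steinhausSum_pow_four_le (b : ι → ℂ) (s : Finset ι) :
    ∫ z, ‖steinhausSum b s z‖ ^ 4 ∂torusMeasure ι ≤ 2 * (∑ j ∈ s, ‖b j‖ ^ 2) ^ 2 := by
  classical
  induction s using Finset.induction_on with
  | empty => simp [steinhausSum]
  | insert a s ha ih =>
    rw [integral_steinhausSum_insert b ha (F := fun w => ‖w‖ ^ 4) (by fun_prop)]
    simp only [integral_circleHaar_norm_mul_add_pow_four]
    rw [integral_add (integrable_of_continuous (by fun_prop)) (integrable_of_continuous
      (by fun_prop)), integral_add (integrable_const _) (integrable_of_continuous (by fun_prop)),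
      integral_const_mul, integral_norm_steinhausSum_sq, Finset.sum_insert ha]
    simp only [integral_const, probReal_univ, one_smul]
    nlinarith [pow_nonneg (norm_nonneg (b a)) 4]

end SteinhausSum

/-! ### Alternating Taylor bounds -/

theorem nonneg_of_hasDerivAt_nonneg {f f' : ℝ → ℝ} (hf : ∀ x, HasDerivAt f (f' x) x)
    (hf' : ∀ x, 0 ≤ x → 0 ≤ f' x) (h0 : 0 ≤ f 0) {x : ℝ} (hx : 0 ≤ x) : 0 ≤ f x := by
  have hmono : MonotoneOn f (Ici 0) :=
    monotoneOn_of_deriv_nonneg (convex_Ici 0) (fun y _ => (hf y).continuousAt.continuousWithinAt)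
      (fun y _ => (hf y).differentiableAt.differentiableWithinAt) fun y hy => by
        rw [(hf y).deriv]
        exact hf' y (interior_subset hy)
  exact h0.trans (hmono self_mem_Ici hx hx)

theorem hasDerivAt_pow_succ_div_factorial (n : ℕ) (x : ℝ) :
    HasDerivAt (fun y : ℝ => y ^ (n + 1) / (n + 1).factorial) (x ^ n / n.factorial) x := by
  refine ((hasDerivAt_pow (n + 1) x).div_const _).congr_deriv ?_
  push_cast [Nat.factorial_succ]
  rw [mul_div_mul_left _ _ n.cast_add_one_ne_zero]

theorem sin_taylor_remainder_nonneg {n : ℕ}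
    (hcos : ∀ x : ℝ, 0 ≤ (-1) ^ (n + 1) *
      (cos x - ∑ k ∈ Finset.range (n + 1), (-1) ^ k * (x ^ (2 * k) / (2 * k).factorial)))
    {x : ℝ} (hx : 0 ≤ x) :
    0 ≤ (-1) ^ (n + 1) * (sin x -
      ∑ k ∈ Finset.range (n + 1), (-1) ^ k * (x ^ (2 * k + 1) / (2 * k + 1).factorial)) := by
  refine nonneg_of_hasDerivAt_nonneg (fun y => (((hasDerivAt_sin y).fun_sub (.fun_sum fun k _ =>
    (hasDerivAt_pow_succ_div_factorial (2 * k) y).const_mul _)).const_mul _))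
    (fun y _ => hcos y) ?_ hx
  simp

theorem cos_taylor_remainder_nonneg (n : ℕ) (x : ℝ) :
    0 ≤ (-1) ^ (n + 1) *
      (cos x - ∑ k ∈ Finset.range (n + 1), (-1) ^ k * (x ^ (2 * k) / (2 * k).factorial)) := by
  induction n generalizing x with
  | zero => simp [cos_le_one]
  | succ n ih =>
    suffices h : ∀ y : ℝ, 0 ≤ y → 0 ≤ (-1) ^ (n + 2) * (cos y -
        ∑ k ∈ Finset.range (n + 2), (-1) ^ k * (y ^ (2 * k) / (2 * k).factorial)) by
      simpa only [cos_abs, pow_mul, sq_abs] using h |x| (abs_nonneg x)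
    have hderiv (y : ℝ) : HasDerivAt (fun y => (-1) ^ (n + 2) * (cos y -
        ∑ k ∈ Finset.range (n + 2), (-1) ^ k * (y ^ (2 * k) / (2 * k).factorial)))
        ((-1) ^ (n + 1) * (sin y - ∑ k ∈ Finset.range (n + 1),
          (-1) ^ k * (y ^ (2 * k + 1) / (2 * k + 1).factorial))) y := by
      simp only [Finset.sum_range_succ' _ (n + 1), mul_zero, pow_zero]
      refine HasDerivAt.congr_deriv (((hasDerivAt_cos y).fun_sub ((HasDerivAt.fun_sum fun k _ =>
        (hasDerivAt_pow_succ_div_factorial (2 * k + 1) y).const_mul _).add_const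
        _)).const_mul _) ?_
      simp only [pow_succ _ (n + 1), pow_succ (-1 : ℝ), mul_neg_one, neg_mul,
        Finset.sum_neg_distrib]
      ring
    exact fun y hy => nonneg_of_hasDerivAt_nonneg hderiv
      (fun y hy => sin_taylor_remainder_nonneg ih hy) (by simp [Finset.sum_range_succ']) hy

theorem exp_neg_taylor_remainder_nonneg (n : ℕ) {x : ℝ} (hx : 0 ≤ x) :
    0 ≤ (-1) ^ n * (exp (-x) - ∑ k ∈ Finset.range n, (-1) ^ k * (x ^ k / k.factorial)) := by
  induction n generalizing x with
  | zero => simp [(exp_pos _).le]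
  | succ n ih =>
    have hderiv (y : ℝ) : HasDerivAt (fun y => (-1) ^ (n + 1) * (exp (-y) -
        ∑ k ∈ Finset.range (n + 1), (-1) ^ k * (y ^ k / k.factorial)))
        ((-1) ^ n * (exp (-y) - ∑ k ∈ Finset.range n, (-1) ^ k * (y ^ k / k.factorial))) y := by
      simp only [Finset.sum_range_succ' _ n, pow_zero]
      refine HasDerivAt.congr_deriv (((hasDerivAt_neg y).exp.fun_sub ((HasDerivAt.fun_sum fun k _ =>
        (hasDerivAt_pow_succ_div_factorial k y).const_mul _).add_const
        _)).const_mul _) ?_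
      simp only [pow_succ (-1 : ℝ), mul_neg_one, neg_mul, Finset.sum_neg_distrib]
      ring
    exact nonneg_of_hasDerivAt_nonneg hderiv (fun y hy => ih hy)
      (by simp [Finset.sum_range_succ']) hx

/-! ### The Bessel functions `J₀` and `J₁` -/

/-- The Bessel function `J₀`, as the characteristic function of the real part of a Steinhaus
variable. -/
noncomputable def besselJ0 (x : ℝ) : ℝ := ∫ u : Circle, cos (x * (u : ℂ).re) ∂circleHaar

/-- The Bessel function `J₁`, as minus the derivative of `J₀`. -/
noncomputable def besselJ1 (x : ℝ) : ℝ :=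
  ∫ u : Circle, (u : ℂ).re * sin (x * (u : ℂ).re) ∂circleHaar

theorem abs_besselJ0_le_one (x : ℝ) : |besselJ0 x| ≤ 1 := by
  have hbound (u : Circle) : ‖cos (x * (u : ℂ).re)‖ ≤ 1 := abs_cos_le_one _
  simpa [besselJ0] using norm_integral_le_of_norm_le_const (μ := circleHaar) (.of_forall hbound)

theorem hasDerivAt_integral_circleHaar_mul_re {f f' : ℝ → ℝ} {C : ℝ}
    (hf : ∀ y, HasDerivAt f (f' y) y) (hf' : Continuous f') (hC : ∀ y, |f' y| ≤ C)
    {g : Circle → ℝ} (hg : Continuous g) (x : ℝ) :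
    HasDerivAt (fun x => ∫ u : Circle, g u * f (x * (u : ℂ).re) ∂circleHaar)
      (∫ u : Circle, g u * (f' (x * (u : ℂ).re) * (u : ℂ).re) ∂circleHaar) x := by
  have hf_cont : Continuous f := continuous_iff_continuousAt.2 fun y => (hf y).continuousAt
  refine (hasDerivAt_integral_of_dominated_loc_of_deriv_le (s := univ)
    (F := fun y u => g u * f (y * (u : ℂ).re))
    (F' := fun y u => g u * (f' (y * (u : ℂ).re) * (u : ℂ).re))
    (bound := fun u => |g u| * C) univ_mem
    (.of_forall fun y => (by fun_prop : Continuous _).aestronglyMeasurable)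
    (integrable_of_continuous (by fun_prop))
    (by fun_prop : Continuous _).aestronglyMeasurable
    (.of_forall fun u y _ => ?_) (integrable_of_continuous (by fun_prop))
    (.of_forall fun u y _ => ?_)).2
  · rw [norm_mul, norm_mul, norm_eq_abs, norm_eq_abs, norm_eq_abs]
    refine mul_le_mul_of_nonneg_left ?_ (abs_nonneg _)
    exact (mul_le_of_le_one_right (abs_nonneg _)
      ((Complex.abs_re_le_norm _).trans_eq (Circle.norm_coe u))).trans (hC _)
  · simpa using ((hf _).comp y ((hasDerivAt_id y).mul_const (u : ℂ).re)).const_mul (g u)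

theorem hasDerivAt_besselJ0 (x : ℝ) : HasDerivAt besselJ0 (-besselJ1 x) x := by
  have h := hasDerivAt_integral_circleHaar_mul_re (g := 1) hasDerivAt_cos continuous_sin.neg
    (fun y => (abs_neg (sin y)).trans_le (abs_sin_le_one y)) continuous_const x
  simp only [Pi.one_apply, one_mul, neg_mul, integral_neg, mul_comm (sin _)] at h
  exact h

theorem hasDerivAt_besselJ1 (x : ℝ) : HasDerivAt besselJ1
    (∫ u : Circle, (u : ℂ).re ^ 2 * cos (x * (u : ℂ).re) ∂circleHaar) x := by
  have h := hasDerivAt_integral_circleHaar_mul_re (g := fun u : Circle => (u : ℂ).re)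
    hasDerivAt_sin continuous_cos abs_cos_le_one (by fun_prop) x
  simp only [mul_comm (cos _), ← mul_assoc, ← sq] at h
  exact h

@[fun_prop]
theorem continuous_besselJ0 : Continuous besselJ0 :=
  continuous_iff_continuousAt.2 fun x => (hasDerivAt_besselJ0 x).continuousAt

/-- Integration by parts: the integrand of the difference is the derivative of
`θ ↦ sin θ * sin (x * cos θ)`. -/
theorem besselJ1_eq (x : ℝ) : besselJ1 x = x * (besselJ0 x -
    ∫ u : Circle, (u : ℂ).re ^ 2 * cos (x * (u : ℂ).re) ∂circleHaar) := by
  have hderiv (θ : ℝ) : HasDerivAt (fun θ => sin θ * sin (x * cos θ)) (cos θ * sin (x * cos θ) -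
      x * (cos (x * cos θ) - cos θ ^ 2 * cos (x * cos θ))) θ := by
    refine ((hasDerivAt_sin θ).mul ((hasDerivAt_cos θ).const_mul x).sin).congr_deriv ?_
    linear_combination (-x * cos (x * cos θ)) * sin_sq_add_cos_sq θ
  have hftc := intervalIntegral.integral_eq_sub_of_hasDerivAt (a := 0) (b := 2 * π)
    (fun θ _ => hderiv θ) (Continuous.intervalIntegrable (by fun_prop) _ _)
  have hcircle := integral_circleHaar (f := fun u : Circle =>
    (u : ℂ).re * sin (x * (u : ℂ).re) -
      x * (cos (x * (u : ℂ).re) - (u : ℂ).re ^ 2 * cos (x * (u : ℂ).re))) (by fun_prop)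
  simp only [Circle.coe_exp, Complex.exp_ofReal_mul_I_re, hftc, sin_two_pi, sin_zero, zero_mul,
    sub_zero, smul_zero] at hcircle
  rw [integral_sub (integrable_of_continuous (by fun_prop)) (integrable_of_continuous
    (by fun_prop)), integral_const_mul, integral_sub (integrable_of_continuous (by fun_prop))
    (integrable_of_continuous (by fun_prop))] at hcircle
  exact sub_eq_zero.1 hcircle

theorem hasDerivAt_mul_besselJ1 (x : ℝ) :
    HasDerivAt (fun y => y * besselJ1 y) (x * besselJ0 x) x := by
  refine ((hasDerivAt_id x).mul (hasDerivAt_besselJ1 x)).congr_deriv ?_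
  rw [id_eq, besselJ1_eq]
  ring

theorem antitoneOn_besselJ0_sq_add_besselJ1_sq :
    AntitoneOn (fun x => besselJ0 x ^ 2 + besselJ1 x ^ 2) (Ici 0) := by
  have hderiv (x : ℝ) := ((hasDerivAt_besselJ0 x).fun_pow 2).fun_add
    ((hasDerivAt_besselJ1 x).fun_pow 2)
  refine antitoneOn_of_deriv_nonpos (convex_Ici 0)
    (fun y _ => (hderiv y).continuousAt.continuousWithinAt)
    (fun y _ => (hderiv y).differentiableAt.differentiableWithinAt) fun y hy => ?_
  rw [interior_Ici] at hy
  rw [(hderiv y).deriv, besselJ1_eq y]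
  have := mul_nonneg (le_of_lt hy) (sq_nonneg (besselJ0 y -
    ∫ u : Circle, (u : ℂ).re ^ 2 * cos (y * (u : ℂ).re) ∂circleHaar))
  norm_num
  linarith

theorem besselJ0_taylor_remainder_nonneg (n : ℕ) (x : ℝ) :
    0 ≤ (-1) ^ (n + 1) * (besselJ0 x -
      ∑ k ∈ Finset.range (n + 1), (-1) ^ k * ((x / 2) ^ (2 * k) / k.factorial ^ 2)) := by
  have hcoeff (k : ℕ) : ∫ u : Circle, (-1) ^ k * ((x * (u : ℂ).re) ^ (2 * k) /
      (2 * k).factorial) ∂circleHaar = (-1) ^ k * ((x / 2) ^ (2 * k) / k.factorial ^ 2) := by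
    have hfac : ((2 * k).factorial : ℝ) = k.centralBinom * k.factorial ^ 2 := by
      have := Nat.choose_mul_factorial_mul_factorial (show k ≤ 2 * k by lia)
      rw [show 2 * k - k = k by lia, mul_assoc, ← sq, ← Nat.centralBinom_eq_two_mul_choose] at this
      exact mod_cast this.symm
    have hbinom : (k.centralBinom : ℝ) ≠ 0 := mod_cast k.centralBinom_ne_zero
    rw [integral_const_mul, integral_div]
    simp only [mul_pow, div_pow]
    rw [integral_const_mul, integral_circleHaar_re_pow, hfac, pow_mul 2]
    norm_num
    field_simp
  simp_rw [← hcoeff]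
  rw [besselJ0, ← integral_finsetSum _ fun k _ => integrable_of_continuous (by fun_prop),
    ← integral_sub (integrable_of_continuous (by fun_prop))
      (integrable_of_continuous (by fun_prop)), ← integral_const_mul]
  exact integral_nonneg fun u => cos_taylor_remainder_nonneg n _

theorem mul_besselJ1_taylor_remainder_nonneg (n : ℕ) {x : ℝ} (hx : 0 ≤ x) :
    0 ≤ (-1) ^ (n + 1) * (x * besselJ1 x - ∑ k ∈ Finset.range (n + 1),
      (-1) ^ k * (2 * (x / 2) ^ (2 * k + 2) / (k.factorial * (k + 1).factorial))) := by
  have hterm (k : ℕ) (y : ℝ) : HasDerivAt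
      (fun y : ℝ => 2 * (y / 2) ^ (2 * k + 2) / (k.factorial * (k + 1).factorial))
      (y * ((y / 2) ^ (2 * k) / k.factorial ^ 2)) y := by
    refine (((((hasDerivAt_id y).div_const 2).fun_pow (2 * k + 2)).const_mul 2).div_const
      _).congr_deriv ?_
    push_cast [Nat.factorial_succ, id_eq]
    field_simp
    ring
  refine nonneg_of_hasDerivAt_nonneg (fun y => ((hasDerivAt_mul_besselJ1 y).fun_sub
    (.fun_sum fun k _ => (hterm k y).const_mul _)).const_mul _) (fun y hy => ?_) ?_ hx
  · simp only [mul_left_comm _ y, ← Finset.mul_sum, ← mul_sub]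
    exact mul_nonneg hy (besselJ0_taylor_remainder_nonneg n y)
  · simp

theorem one_sub_sq_div_four_le_besselJ0 (x : ℝ) : 1 - x ^ 2 / 4 ≤ besselJ0 x := by
  have h := besselJ0_taylor_remainder_nonneg 1 x
  norm_num [Finset.sum_range_succ] at h
  linarith

theorem besselJ0_le_quartic (x : ℝ) :
    besselJ0 x ≤ 1 - (x / 2) ^ 2 + ((x / 2) ^ 2) ^ 2 / 4 := by
  have h := besselJ0_taylor_remainder_nonneg 2 x
  norm_num [Finset.sum_range_succ, Nat.factorial] at h
  linarith

theorem sextic_le_besselJ0 (x : ℝ) :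
    1 - (x / 2) ^ 2 + ((x / 2) ^ 2) ^ 2 / 4 - ((x / 2) ^ 2) ^ 3 / 36 ≤ besselJ0 x := by
  have h := besselJ0_taylor_remainder_nonneg 3 x
  norm_num [Finset.sum_range_succ, Nat.factorial] at h
  linarith

theorem abs_besselJ0_sixteen_fifths_le : |besselJ0 (16 / 5)| ≤ 0.3208 := by
  have hlower := besselJ0_taylor_remainder_nonneg 5 (16 / 5)
  have hupper := besselJ0_taylor_remainder_nonneg 4 (16 / 5)
  norm_num [Finset.sum_range_succ, Nat.factorial] at hlower hupper
  exact abs_le.2 ⟨by linarith, by linarith⟩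

theorem abs_besselJ1_sixteen_fifths_le : |besselJ1 (16 / 5)| ≤ 0.2635 := by
  have hlower := mul_besselJ1_taylor_remainder_nonneg 3 (x := 16 / 5) (by norm_num)
  have hupper := mul_besselJ1_taylor_remainder_nonneg 4 (x := 16 / 5) (by norm_num)
  norm_num [Finset.sum_range_succ, Nat.factorial] at hlower hupper
  exact abs_le.2 ⟨by linarith, by linarith⟩

/-- Up to `16 / 5` the Taylor polynomials suffice; beyond, `J₀² + J₁²` is nonincreasing. -/
theorem abs_besselJ0_le {x : ℝ} (hx : 2.2 ≤ x) : |besselJ0 x| ≤ 0.42 := by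
  rcases le_total x (16 / 5) with h | h
  · have hlower := sextic_le_besselJ0 x
    have hupper := besselJ0_le_quartic x
    have hw : (x / 2) ^ 2 ∈ Icc (1.21 : ℝ) 2.56 := ⟨by nlinarith, by nlinarith⟩
    generalize (x / 2) ^ 2 = w at *
    have hw3 : w ^ 3 ≤ 2.56 * w ^ 2 := by nlinarith [hw.2, sq_nonneg w]
    exact abs_le.2 ⟨by nlinarith [hw.1, hw.2], by nlinarith [hw.1, hw.2]⟩
  · have henergy := antitoneOn_besselJ0_sq_add_besselJ1_sq (a := 16 / 5) (by norm_num)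
      (mem_Ici.2 (by linarith)) h
    have hJ0 := pow_le_pow_left₀ (abs_nonneg _) abs_besselJ0_sixteen_fifths_le 2
    have hJ1 := pow_le_pow_left₀ (abs_nonneg _) abs_besselJ1_sixteen_fifths_le 2
    rw [sq_abs] at hJ0 hJ1
    refine abs_le_of_sq_le_sq ?_ (by norm_num)
    norm_num at henergy hJ0 hJ1 ⊢
    linarith [sq_nonneg (besselJ1 x)]

/-! ### The integral representation of the first absolute moment -/

theorem integrableOn_Ioi_div_sq {f : ℝ → ℝ} (hf : Continuous f) {C : ℝ}
    (hsq : ∀ x, |f x| ≤ C * x ^ 2) (hbdd : ∀ x, |f x| ≤ C) :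
    IntegrableOn (fun x => f x / x ^ 2) (Ioi 0) := by
  refine Integrable.mono' ((integrable_inv_one_add_sq.const_mul (2 * C)).integrableOn)
    (hf.measurable.div (measurable_id.pow_const 2)).aestronglyMeasurable
    ((ae_restrict_mem measurableSet_Ioi).mono fun x (hx : 0 < x) => ?_)
  rw [norm_eq_abs, abs_div, abs_sq, div_le_iff₀ (by positivity), ← div_eq_mul_inv,
    div_mul_eq_mul_div, le_div_iff₀ (by positivity)]
  linarith [hsq x, mul_le_mul_of_nonneg_right (hbdd x) (sq_nonneg x)]

theorem comp_mul_div_sq_eq (f : ℝ → ℝ) {a : ℝ} (ha : a ≠ 0) (t : ℝ) :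
    f (t * a) / t ^ 2 = a ^ 2 * (f (a * t) / (a * t) ^ 2) := by
  rw [mul_comm t, mul_pow, ← mul_div_assoc, mul_div_mul_left _ _ (pow_ne_zero 2 ha)]

theorem integrableOn_Ioi_comp_mul_div_sq {f : ℝ → ℝ}
    (hf : IntegrableOn (fun x => f x / x ^ 2) (Ioi 0)) {a : ℝ} (ha : 0 < a) :
    IntegrableOn (fun t => f (t * a) / t ^ 2) (Ioi 0) := by
  simp only [comp_mul_div_sq_eq f ha.ne']
  refine Integrable.const_mul ?_ _
  refine (integrableOn_Ioi_comp_mul_left_iff (fun x => f x / x ^ 2) 0 ha).2 ?_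
  rwa [mul_zero]

theorem integral_Ioi_comp_mul_div_sq (f : ℝ → ℝ) {a : ℝ} (ha : 0 < a) :
    ∫ t in Ioi (0 : ℝ), f (t * a) / t ^ 2 = a * ∫ x in Ioi (0 : ℝ), f x / x ^ 2 := by
  simp only [comp_mul_div_sq_eq f ha.ne']
  rw [integral_const_mul, integral_comp_mul_left_Ioi (fun x => f x / x ^ 2) 0 ha, mul_zero,
    smul_eq_mul, sq, mul_assoc, mul_inv_cancel_left₀ ha.ne']

theorem integrableOn_Ioi_one_sub_cos_mul_div_sq (y : ℝ) :
    IntegrableOn (fun t => (1 - cos (t * y)) / t ^ 2) (Ioi 0) := by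
  have habs (t : ℝ) : |1 - cos (t * y)| = 1 - cos (t * y) :=
    abs_of_nonneg (sub_nonneg.2 (cos_le_one _))
  refine integrableOn_Ioi_div_sq (C := y ^ 2 + 2) (by fun_prop) (fun t => ?_) fun t => ?_ <;>
    rw [habs]
  · nlinarith [one_sub_sq_div_two_le_cos (x := t * y), sq_nonneg t, sq_nonneg (t * y)]
  · linarith [neg_one_le_cos (t * y), sq_nonneg y]

theorem integral_Ioi_one_sub_cos_mul_div_sq (y : ℝ) :
    ∫ t in Ioi (0 : ℝ), (1 - cos (t * y)) / t ^ 2 =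
      |y| * ∫ t in Ioi (0 : ℝ), (1 - cos t) / t ^ 2 := by
  rcases eq_or_ne y 0 with rfl | hy
  · simp
  rw [← integral_Ioi_comp_mul_div_sq (fun x => 1 - cos x) (abs_pos.2 hy)]
  refine integral_congr_ae (.of_forall fun t => ?_)
  simp only [← cos_abs (t * y), ← cos_abs (t * |y|), abs_mul, abs_abs]

section FirstMoment

variable {Ω : Type*} [MeasurableSpace Ω] {μ : Measure Ω} {X g : Ω → ℝ}

theorem integrable_prod_mul_one_sub_cos_div_sq (hX : Measurable X) (hg : Measurable g)
    (hgX : Integrable (fun ω => g ω * X ω) μ) :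
    Integrable (Function.uncurry fun ω t => g ω * ((1 - cos (t * X ω)) / t ^ 2))
      (μ.prod (volume.restrict (Ioi 0))) := by
  have hnorm (ω : Ω) : ∫ t in Ioi (0 : ℝ), ‖g ω * ((1 - cos (t * X ω)) / t ^ 2)‖ =
      ‖g ω * X ω‖ * ∫ t in Ioi (0 : ℝ), (1 - cos t) / t ^ 2 := by
    rw [norm_mul, mul_assoc, norm_eq_abs (X ω), ← integral_Ioi_one_sub_cos_mul_div_sq,
      ← integral_const_mul]
    refine integral_congr_ae (.of_forall fun t => ?_)
    simp only [norm_mul]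
    rw [norm_of_nonneg (div_nonneg (sub_nonneg.2 (cos_le_one (t * X ω))) (sq_nonneg t))]
  refine (integrable_prod_iff (Measurable.aestronglyMeasurable (by fun_prop))).2
    ⟨.of_forall fun ω =>
      (integrableOn_Ioi_one_sub_cos_mul_div_sq (X ω)).integrable.const_mul (g ω), ?_⟩
  simp only [Function.uncurry_apply_pair, hnorm]
  exact hgX.norm.mul_const _

variable [SFinite μ]

theorem integrableOn_Ioi_integral_mul_one_sub_cos_div_sq (hX : Measurable X) (hg : Measurable g)
    (hgX : Integrable (fun ω => g ω * X ω) μ) :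
    IntegrableOn (fun t => (∫ ω, g ω * (1 - cos (t * X ω)) ∂μ) / t ^ 2) (Ioi 0) := by
  have h := (integrable_prod_mul_one_sub_cos_div_sq hX hg hgX).integral_prod_right
  simp only [Function.uncurry_apply_pair, ← mul_div_assoc, integral_div] at h
  exact h

theorem integral_Ioi_integral_mul_one_sub_cos_div_sq (hX : Measurable X) (hg : Measurable g)
    (hgX : Integrable (fun ω => g ω * X ω) μ) :
    ∫ t in Ioi (0 : ℝ), (∫ ω, g ω * (1 - cos (t * X ω)) ∂μ) / t ^ 2 =
      (∫ ω, g ω * |X ω| ∂μ) * ∫ t in Ioi (0 : ℝ), (1 - cos t) / t ^ 2 :=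
  calc ∫ t in Ioi (0 : ℝ), (∫ ω, g ω * (1 - cos (t * X ω)) ∂μ) / t ^ 2
      = ∫ t in Ioi (0 : ℝ), (∫ ω, g ω * ((1 - cos (t * X ω)) / t ^ 2) ∂μ) := by
        simp only [← mul_div_assoc, integral_div]
    _ = ∫ ω, (∫ t in Ioi (0 : ℝ), g ω * ((1 - cos (t * X ω)) / t ^ 2)) ∂μ :=
        (integral_integral_swap (integrable_prod_mul_one_sub_cos_div_sq hX hg hgX)).symm
    _ = ∫ ω, g ω * |X ω| * (∫ t in Ioi (0 : ℝ), (1 - cos t) / t ^ 2) ∂μ := by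
        simp only [integral_const_mul, integral_Ioi_one_sub_cos_mul_div_sq, ← mul_assoc]
    _ = _ := integral_mul_const _ _

end FirstMoment

theorem integral_Ioi_exp_neg_mul_one_sub_cos (t : ℝ) :
    ∫ x in Ioi (0 : ℝ), exp (-x) * (1 - cos (t * x)) = t ^ 2 * (1 + t ^ 2)⁻¹ := by
  have hre : (-1 + t * Complex.I).re < 0 := by simp
  have hint := integrableOn_exp_mul_complex_Ioi hre 0
  have hexp (x : ℝ) :
      exp (-x) * cos (t * x) = RCLike.re (Complex.exp ((-1 + t * Complex.I) * x)) := by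
    simp [Complex.exp_re]
  have hcos : ∫ x in Ioi (0 : ℝ), exp (-x) * cos (t * x) = (1 + t ^ 2)⁻¹ := by
    simp only [hexp]
    rw [integral_re hint, integral_exp_mul_complex_Ioi hre]
    simp [Complex.div_re, Complex.normSq_apply, sq]
  simp only [mul_sub, mul_one]
  rw [integral_sub (integrableOn_exp_neg_Ioi 0) (by simpa only [hexp] using hint.re), hcos,
    integral_exp_neg_Ioi_zero]
  field_simp
  ring

-- The constant is read off from the exponential distribution.
theorem integral_Ioi_one_sub_cos_div_sq : ∫ t in Ioi (0 : ℝ), (1 - cos t) / t ^ 2 = π / 2 := by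
  have hmoment := Real.Gamma_eq_integral two_pos
  have hpow (x : ℝ) : x ^ ((2 : ℝ) - 1) = x := by norm_num
  simp only [Gamma_two, hpow] at hmoment
  have hint : IntegrableOn (fun x => exp (-x) * x) (Ioi 0) := by
    simpa only [hpow] using Real.GammaIntegral_convergent two_pos
  have hrepr := integral_Ioi_integral_mul_one_sub_cos_div_sq (g := fun x => exp (-x))
    (X := fun x => x) measurable_id (by fun_prop) hint.integrable
  have habs : ∫ x in Ioi (0 : ℝ), exp (-x) * |x| = 1 := by
    rw [hmoment]
    exact setIntegral_congr_fun measurableSet_Ioi fun x (hx : 0 < x) => by rw [abs_of_pos hx]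
  simp only [habs, one_mul, integral_Ioi_exp_neg_mul_one_sub_cos] at hrepr
  calc ∫ t in Ioi (0 : ℝ), (1 - cos t) / t ^ 2
      = ∫ t in Ioi (0 : ℝ), t ^ 2 * (1 + t ^ 2)⁻¹ / t ^ 2 := hrepr.symm
    _ = ∫ t in Ioi (0 : ℝ), (1 + t ^ 2)⁻¹ :=
        setIntegral_congr_fun measurableSet_Ioi fun t (ht : 0 < t) => by field_simp
    _ = π / 2 := by rw [integral_Ioi_inv_one_add_sq, arctan_zero, sub_zero]

theorem integral_exp_neg_mul_sq_mul_one_sub_cos {b : ℝ} (hb : 0 < b) (t : ℝ) :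
    ∫ x : ℝ, exp (-b * x ^ 2) * (1 - cos (t * x)) =
      √(π / b) * (1 - exp (-t ^ 2 / (4 * b))) := by
  have hexp (x : ℝ) : exp (-b * x ^ 2) * cos (t * x) =
      RCLike.re (Complex.exp (Complex.I * t * x) * Complex.exp (-b * x ^ 2)) := by
    rw [mul_assoc, mul_comm Complex.I, ← Complex.ofReal_mul]
    norm_cast
    rw [RCLike.re_to_complex, Complex.re_mul_ofReal, Complex.exp_ofReal_mul_I_re, mul_comm]
  have hint : Integrable fun x : ℝ =>
      Complex.exp (Complex.I * t * x) * Complex.exp (-b * x ^ 2) := by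
    simpa only [← Complex.exp_add, add_comm (Complex.I * t * _), add_zero] using
      integrable_cexp_quadratic' (b := -b) (by simpa using hb) (Complex.I * t) 0
  have hcos : ∫ x : ℝ, exp (-b * x ^ 2) * cos (t * x) = √(π / b) * exp (-t ^ 2 / (4 * b)) := by
    simp only [hexp]
    have hroot : ((π : ℂ) / b) ^ (1 / 2 : ℂ) = √(π / b) := by
      rw [sqrt_eq_rpow, Complex.ofReal_cpow (by positivity)]
      push_cast
      rfl
    rw [integral_re hint, fourierIntegral_gaussian (by simpa using hb), hroot]
    norm_cast
  simp only [mul_sub, mul_one]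
  rw [integral_sub (integrable_exp_neg_mul_sq hb) (by simpa only [hexp] using hint.re), hcos,
    integral_gaussian]

-- Apply the representation to the density `exp (-x ^ 2 / (4 * a))`.
theorem integral_Ioi_one_sub_exp_neg_mul_sq_div_sq {a : ℝ} (ha : 0 < a) :
    ∫ t in Ioi (0 : ℝ), (1 - exp (-(a * t ^ 2))) / t ^ 2 = √(π * a) := by
  set b := (4 * a)⁻¹ with hb_def
  have hb : 0 < b := by positivity
  have habs : ∫ x : ℝ, exp (-b * x ^ 2) * |x| = 2 * (2 * b)⁻¹ := by
    have h := integral_mul_cexp_neg_mul_sq (b := b) (by simpa using hb)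
    norm_cast at h
    rw [← h, ← integral_comp_abs]
    simp only [sq_abs, mul_comm |_|]
  have hrepr := integral_Ioi_integral_mul_one_sub_cos_div_sq (X := fun x : ℝ => x)
    (g := fun x => exp (-b * x ^ 2)) measurable_id (by fun_prop)
    (by simpa only [mul_comm] using integrable_mul_exp_neg_mul_sq hb)
  have hexponent (t : ℝ) : -t ^ 2 / (4 * b) = -(a * t ^ 2) := by
    rw [hb_def]
    field_simp
  simp only [integral_exp_neg_mul_sq_mul_one_sub_cos hb, habs, integral_Ioi_one_sub_cos_div_sq,
    hexponent, mul_div_assoc, integral_const_mul] at hrepr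
  have hsqrt : √(π / b) = 2 * √(π * a) := by
    rw [hb_def, show π / (4 * a)⁻¹ = 2 ^ 2 * (π * a) by field_simp; norm_num,
      sqrt_mul (by positivity), sqrt_sq two_pos.le]
  have hpos : 0 < √(π * a) := by positivity
  rw [hsqrt] at hrepr
  refine mul_left_cancel₀ (mul_pos two_pos hpos).ne' ?_
  rw [hrepr, mul_assoc 2 √(π * a), mul_self_sqrt (by positivity), hb_def]
  field_simp
  norm_num

/-! ### The first absolute moment of a Steinhaus sum -/

theorem integral_circleHaar_cos_mul_re_mul_add (t : ℝ) (c w : ℂ) :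
    ∫ u : Circle, cos (t * (u * c + w).re) ∂circleHaar =
      besselJ0 (t * ‖c‖) * cos (t * w.re) := by
  have hcos : ∫ u : Circle, cos (t * (u * c).re) ∂circleHaar = besselJ0 (t * ‖c‖) := by
    rw [integral_circleHaar_mul_eq_norm fun z => cos (t * z.re), besselJ0]
    simp only [Complex.re_mul_ofReal, mul_assoc, mul_comm ‖c‖]
  have hsin : ∫ u : Circle, sin (t * (u * c).re) ∂circleHaar = 0 :=
    integral_circleHaar_eq_zero_of_odd (f := fun z => sin (t * z.re)) (fun z => by simp) c
  simp only [Complex.add_re, mul_add, cos_add]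
  rw [integral_sub (integrable_of_continuous (by fun_prop))
    (integrable_of_continuous (by fun_prop)), integral_mul_const, integral_mul_const, hcos, hsin,
    zero_mul, sub_zero]

section FirstMomentSteinhaus

variable {ι : Type*} [Fintype ι]

theorem integral_cos_mul_re_steinhausSum (b : ι → ℂ) (s : Finset ι) (t : ℝ) :
    ∫ z, cos (t * (steinhausSum b s z).re) ∂torusMeasure ι =
      ∏ j ∈ s, besselJ0 (t * ‖b j‖) := by
  classical
  induction s using Finset.induction_on with
  | empty => simp [steinhausSum]
  | insert a s ha ih =>
    rw [integral_steinhausSum_insert b ha (F := fun z => cos (t * z.re)) (by fun_prop),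
      Finset.prod_insert ha, ← ih, ← integral_const_mul]
    simp only [integral_circleHaar_cos_mul_re_mul_add]

theorem integral_one_sub_cos_mul_re_steinhausSum (b : ι → ℂ) (s : Finset ι) (t : ℝ) :
    ∫ z, (1 - cos (t * (steinhausSum b s z).re)) ∂torusMeasure ι =
      1 - ∏ j ∈ s, besselJ0 (t * ‖b j‖) := by
  rw [integral_sub (integrable_const 1) (integrable_of_continuous (by fun_prop)),
    integral_cos_mul_re_steinhausSum, integral_const, probReal_univ, one_smul]

theorem integral_norm_steinhausSum_eq_integral_Ioi (b : ι → ℂ) (s : Finset ι) :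
    ∫ z, ‖steinhausSum b s z‖ ∂torusMeasure ι =
      ∫ t in Ioi (0 : ℝ), (1 - ∏ j ∈ s, besselJ0 (t * ‖b j‖)) / t ^ 2 := by
  have h := integral_Ioi_integral_mul_one_sub_cos_div_sq (μ := torusMeasure ι)
    (X := fun z => (steinhausSum b s z).re) (g := fun _ => 1) (by fun_prop) measurable_const
    (integrable_of_continuous (by fun_prop))
  simp only [one_mul, integral_one_sub_cos_mul_re_steinhausSum, integral_abs_re_steinhausSum,
    integral_Ioi_one_sub_cos_div_sq] at h
  rw [h]
  field_simp

end FirstMomentSteinhaus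

theorem integrableOn_Ioi_one_sub_prod_besselJ0_div_sq {ι : Type*} (b : ι → ℂ) (s : Finset ι) :
    IntegrableOn (fun t => (1 - ∏ j ∈ s, besselJ0 (t * ‖b j‖)) / t ^ 2) (Ioi 0) := by
  have h := integrableOn_Ioi_integral_mul_one_sub_cos_div_sq (μ := torusMeasure s)
    (X := fun z => (steinhausSum (fun j : s => b j) Finset.univ z).re) (g := fun _ => 1)
    (by fun_prop) measurable_const (integrable_of_continuous (by fun_prop))
  simp only [one_mul, integral_one_sub_cos_mul_re_steinhausSum] at h
  simpa only [← Finset.prod_coe_sort s] using h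

theorem integral_circleHaar_norm_sub_one : ∫ u : Circle, ‖(u : ℂ) - 1‖ ∂circleHaar = 4 / π := by
  have hnorm : ∀ θ ∈ uIcc 0 (2 * π), ‖(Circle.exp θ : ℂ) - 1‖ = 2 * sin (θ / 2) := fun θ hθ => by
    rw [uIcc_of_le two_pi_pos.le] at hθ
    have hsin : 0 ≤ sin (θ / 2) := sin_nonneg_of_mem_Icc ⟨by linarith [hθ.1], by linarith [hθ.2]⟩
    rw [Circle.coe_exp, mul_comm, Complex.norm_exp_I_mul_ofReal_sub_one,
      norm_of_nonneg (by positivity)]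
  have hsin : ∫ θ in (0 : ℝ)..2 * π, sin (θ / 2) = 4 := by
    rw [intervalIntegral.integral_comp_div sin two_ne_zero, mul_div_cancel_left₀ π two_ne_zero,
      zero_div, integral_sin, cos_zero, cos_pi, smul_eq_mul]
    norm_num
  rw [integral_circleHaar (by fun_prop), intervalIntegral.integral_congr hnorm,
    intervalIntegral.integral_const_mul, hsin, smul_eq_mul]
  field

-- The mean of `‖z₁ - z₂‖`.
theorem integral_Ioi_one_sub_besselJ0_sq_div_sq :
    ∫ t in Ioi (0 : ℝ), (1 - besselJ0 t ^ 2) / t ^ 2 = 4 / π := by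
  have hrotate (z : Fin 2 → Circle) :
      ∫ u : Circle, ‖u * (![1, -1] 0 : ℂ) + steinhausSum ![1, -1] {1} z‖ ∂circleHaar = 4 / π := by
    rw [← integral_circleHaar_norm_sub_one,
      ← integral_mul_right_eq_self (fun u : Circle => ‖(u : ℂ) - 1‖) (z 1)⁻¹]
    refine integral_congr_ae (.of_forall fun u => ?_)
    have hfactor : (u : ℂ) - z 1 = ((u * (z 1)⁻¹ : Circle) - 1) * z 1 := by
      rw [sub_mul, one_mul, ← Circle.coe_mul, inv_mul_cancel_right]
    have hnorm : ‖(u : ℂ) - z 1‖ = ‖((u * (z 1)⁻¹ : Circle) : ℂ) - 1‖ := by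
      rw [hfactor, norm_mul, Circle.norm_coe, mul_one]
    simpa [steinhausSum, ← sub_eq_add_neg] using hnorm
  have h := integral_norm_steinhausSum_eq_integral_Ioi (![1, -1] : Fin 2 → ℂ) {0, 1}
  rw [integral_steinhausSum_insert _ (by simp) continuous_norm] at h
  simp only [hrotate] at h
  simpa [← sq] using h.symm

/-! ### Powers of `J₀²` against Gaussians -/

theorem mul_rpow_sub_one_mul_sub_le_rpow_sub_rpow {m V U σ : ℝ} (hm : 0 < m) (hmV : m ≤ V)
    (hVU : V ≤ U) (hσ : 1 ≤ σ) : σ * m ^ (σ - 1) * (U - V) ≤ U ^ σ - V ^ σ := by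
  have hV : 0 < V := hm.trans_le hmV
  have hVσ : V ^ σ = V ^ (σ - 1) * V := by rw [rpow_sub_one hV.ne', div_mul_cancel₀ _ hV.ne']
  have hbernoulli : 1 + σ * ((U - V) / V) ≤ (U / V) ^ σ := by
    have h := one_add_mul_self_le_rpow_one_add (s := (U - V) / V)
      (by linarith [div_nonneg (sub_nonneg.2 hVU) hV.le]) hσ
    rwa [← div_self hV.ne', ← add_div, add_sub_cancel, div_self hV.ne'] at h
  calc σ * m ^ (σ - 1) * (U - V) ≤ σ * V ^ (σ - 1) * (U - V) := by
        have := rpow_le_rpow hm.le hmV (sub_nonneg.2 hσ)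
        gcongr
    _ = (1 + σ * ((U - V) / V)) * V ^ σ - V ^ σ := by
        rw [hVσ]
        field_simp
        ring
    _ ≤ (U / V) ^ σ * V ^ σ - V ^ σ := by gcongr
    _ = U ^ σ - V ^ σ := by
        rw [div_rpow (hV.le.trans hVU) hV.le, div_mul_cancel₀ _ (rpow_pos_of_pos hV σ).ne']

theorem rpow_le_mul_rpow_sub_one_mul {V m σ : ℝ} (hV : 0 ≤ V) (hVm : V ≤ m) (hσ : 1 ≤ σ) :
    V ^ σ ≤ σ * m ^ (σ - 1) * V := by
  calc V ^ σ = V ^ (σ - 1) * V := by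
        rw [mul_comm, ← rpow_one_add' hV (by linarith), add_sub_cancel]
    _ ≤ m ^ (σ - 1) * V := by gcongr
    _ ≤ σ * m ^ (σ - 1) * V := by
        gcongr
        exact le_mul_of_one_le_left (rpow_nonneg (hV.trans hVm) _) hσ

theorem le_besselJ0_of_le {x : ℝ} (hx : 0 ≤ x) (hx' : x ≤ 1.65) : 0.42 ≤ besselJ0 x := by
  have hw : (x / 2) ^ 2 ∈ Icc (0 : ℝ) 0.680625 := ⟨by positivity, by nlinarith⟩
  have hsextic := sextic_le_besselJ0 x
  generalize (x / 2) ^ 2 = w at *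
  nlinarith [mul_nonneg hw.1 (sub_nonneg.2 hw.2), hw.1, hw.2]

theorem besselJ0_sq_le_exp {x : ℝ} (hx : 0 ≤ x) (hx' : x ≤ 2.2) :
    besselJ0 x ^ 2 ≤ exp (-(x ^ 2 / 2)) := by
  have hw : (x / 2) ^ 2 ∈ Icc (0 : ℝ) 1.21 := ⟨by positivity, by nlinarith⟩
  have hexp : exp (-(x ^ 2 / 2)) = exp (-(x / 2) ^ 2) ^ 2 := by
    rw [← exp_nat_mul]
    ring_nf
  have htaylor := exp_neg_taylor_remainder_nonneg 4 hw.1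
  norm_num [Finset.sum_range_succ, Nat.factorial] at htaylor
  have hsextic := sextic_le_besselJ0 x
  have hquartic := besselJ0_le_quartic x
  rw [hexp]
  generalize (x / 2) ^ 2 = w at *
  refine pow_le_pow_left₀ ?_ ?_ 2
  · nlinarith [mul_nonneg hw.1 (sub_nonneg.2 hw.2), hw.1, hw.2]
  · nlinarith [mul_nonneg (sq_nonneg w) (sub_nonneg.2 hw.2)]

theorem exp_sub_besselJ0_sq_le {x : ℝ} (hx : 1.65 ≤ x) (hx' : x ≤ 2.2) :
    exp (-(x ^ 2 / 2)) - besselJ0 x ^ 2 ≤ 0.09 := by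
  obtain ⟨h, hh⟩ : ∃ h, h = (x / 2) ^ 2 - 0.68 := ⟨_, rfl⟩
  have hh0 : 0 ≤ h := by nlinarith
  have hh1 : h ≤ 0.53 := by nlinarith
  have hJ0 : 0.4266 - 0.699 * h + 0.1784 * h ^ 2 ≤ besselJ0 x := by
    have hsextic := sextic_le_besselJ0 x
    rw [show (x / 2) ^ 2 = 0.68 + h by linarith] at hsextic
    nlinarith [mul_nonneg (sq_nonneg h) (sub_nonneg.2 hh1)]
  have hexp : exp (-(x ^ 2 / 2)) ≤ 0.2567 * (1 - 2 * h + 2 * h ^ 2 - 0.98 * h ^ 3) := by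
    have hcenter := exp_neg_taylor_remainder_nonneg 9 (x := 1.36) (by norm_num)
    have htaylor := exp_neg_taylor_remainder_nonneg 5 (x := 2 * h) (by positivity)
    norm_num [Finset.sum_range_succ, Nat.factorial] at hcenter htaylor
    have hsplit : exp (-(x ^ 2 / 2)) = exp (-1.36) * exp (-(2 * h)) := by
      rw [← exp_add]
      congr 1
      linear_combination 2 * hh
    rw [hsplit]
    refine mul_le_mul ?_ ?_ (exp_pos _).le (by norm_num)
    · norm_num
      linarith
    · nlinarith [mul_nonneg (pow_nonneg hh0 3) (sub_nonneg.2 hh1)]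
  have hsq := pow_le_pow_left₀ (by nlinarith) hJ0 2
  refine (sub_le_sub hexp hsq).trans ?_
  nlinarith [mul_nonneg hh0 (sub_nonneg.2 hh1), sq_nonneg (h - 0.25), sq_nonneg (h ^ 2 - 0.25 * h)]

theorem exp_neg_sq_div_two_div_sq_le {a x : ℝ} (ha : 0 < a) (ha2 : 2 ≤ a ^ 2) (hx : a ≤ x) :
    exp (-(x ^ 2 / 2)) / x ^ 2 ≤
      exp (-(a ^ 2 / 2)) / a ^ 2 * exp (-(a + 2 / a) * (x - a)) := by
  obtain ⟨s, hs, rfl⟩ : ∃ s, 0 ≤ s ∧ x = a * (1 + s) :=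
    ⟨x / a - 1, sub_nonneg.2 ((one_le_div ha).2 hx), by field_simp; ring⟩
  have hlog : exp (s - s ^ 2 / 2) ≤ 1 + s := by
    rw [← le_log_iff_exp_le (by positivity)]
    refine le_trans ?_ (le_log_one_add_of_nonneg hs)
    rw [le_div_iff₀ (by positivity)]
    nlinarith [pow_nonneg hs 3]
  have hexponent : -((a * (1 + s)) ^ 2 / 2) ≤
      -(a ^ 2 / 2) + -(a + 2 / a) * (a * (1 + s) - a) + 2 * (s - s ^ 2 / 2) := by
    have : -(a + 2 / a) * (a * (1 + s) - a) = -(a ^ 2 + 2) * s := by field_simp; ring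
    nlinarith [mul_le_mul_of_nonneg_right ha2 (sq_nonneg s)]
  calc exp (-((a * (1 + s)) ^ 2 / 2)) / (a * (1 + s)) ^ 2
      ≤ exp (-(a ^ 2 / 2)) * exp (-(a + 2 / a) * (a * (1 + s) - a)) * exp (s - s ^ 2 / 2) ^ 2 /
          (a * (1 + s)) ^ 2 := by
        rw [← exp_nat_mul, ← exp_add, ← exp_add]
        gcongr
        exact_mod_cast hexponent
    _ ≤ exp (-(a ^ 2 / 2)) * exp (-(a + 2 / a) * (a * (1 + s) - a)) * (1 + s) ^ 2 /
          (a * (1 + s)) ^ 2 := by gcongr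
    _ = _ := by field_simp

theorem exp_neg_mul_sub (c a x : ℝ) : exp (-c * (x - a)) = exp (-c * x) * exp (c * a) := by
  rw [← exp_add]
  ring_nf

theorem integrableOn_Ioi_exp_neg_mul_sub {c : ℝ} (hc : 0 < c) (a : ℝ) :
    IntegrableOn (fun x => exp (-c * (x - a))) (Ioi a) := by
  simp only [exp_neg_mul_sub]
  exact (integrableOn_exp_mul_Ioi (neg_neg_of_pos hc) a).mul_const _

theorem integral_Ioi_exp_neg_mul_sub {c : ℝ} (hc : 0 < c) (a : ℝ) :
    ∫ x in Ioi a, exp (-c * (x - a)) = 1 / c := by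
  simp only [exp_neg_mul_sub]
  rw [integral_mul_const, integral_exp_mul_Ioi (neg_neg_of_pos hc), neg_div_neg_eq,
    div_mul_eq_mul_div, ← exp_add, neg_mul, neg_add_cancel, exp_zero]

/-- Where the comparison of `J₀ ^ (2 * σ)` with a Gaussian by convexity breaks down, this is a bound
for its failure. The breakpoints are chosen so that `0.42 ≤ J₀` before the first one and
`|J₀| ≤ 0.42` after the second one. -/
noncomputable def comparisonError (x : ℝ) : ℝ :=
  (Ioc 1.65 2.2).indicator (fun x => 0.09 / x ^ 2) x +
    (Ioi 2.2).indicator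
      (fun x => exp (-(2.2 ^ 2 / 2)) / 2.2 ^ 2 * exp (-(2.2 + 2 / 2.2) * (x - 2.2))) x

theorem comparisonError_of_nonpos {x : ℝ} (hx : x ≤ 0) : comparisonError x = 0 := by
  simp [comparisonError, hx.trans (by norm_num : (0 : ℝ) ≤ 1.65),
    hx.trans (by norm_num : (0 : ℝ) ≤ 2.2)]

theorem integrable_indicator_div_sq :
    Integrable ((Ioc 1.65 2.2).indicator fun x : ℝ => 0.09 / x ^ 2) := by
  refine (integrable_indicator_iff measurableSet_Ioc).2
    ((ContinuousOn.integrableOn_Icc ?_).mono_set Ioc_subset_Icc_self)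
  refine continuousOn_const.div (by fun_prop) fun x hx => pow_ne_zero 2 ?_
  linarith [hx.1]

theorem integrable_indicator_exp : Integrable ((Ioi 2.2).indicator fun x =>
    exp (-(2.2 ^ 2 / 2)) / 2.2 ^ 2 * exp (-(2.2 + 2 / 2.2) * (x - 2.2))) :=
  (integrable_indicator_iff measurableSet_Ioi).2
    ((integrableOn_Ioi_exp_neg_mul_sub (by norm_num) 2.2).const_mul _)

theorem integrable_comparisonError : Integrable comparisonError :=
  integrable_indicator_div_sq.add integrable_indicator_exp

theorem integral_Ioi_comparisonError_le : ∫ x in Ioi (0 : ℝ), comparisonError x ≤ 0.0197 := by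
  have hmid : ∫ x in Ioc (1.65 : ℝ) 2.2, 0.09 / x ^ 2 = 0.09 * (1 / 1.65 - 1 / 2.2) := by
    have hzpow (x : ℝ) : 0.09 / x ^ 2 = 0.09 * x ^ (-2 : ℤ) := by
      rw [zpow_neg, div_eq_mul_inv]
      rfl
    simp only [hzpow]
    rw [← intervalIntegral.integral_of_le (by norm_num), intervalIntegral.integral_const_mul,
      integral_zpow (.inr ⟨by norm_num, by norm_num [uIcc]⟩)]
    norm_num
  have hexp : exp (-(2.2 ^ 2 / 2)) ≤ 0.08895 := by
    have h := exp_neg_taylor_remainder_nonneg 13 (x := 2.2 ^ 2 / 2) (by norm_num)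
    norm_num [Finset.sum_range_succ, Nat.factorial] at h ⊢
    linarith
  have hsum : ∫ x, comparisonError x = 0.09 * (1 / 1.65 - 1 / 2.2) +
      exp (-(2.2 ^ 2 / 2)) / 2.2 ^ 2 * (1 / (2.2 + 2 / 2.2)) := by
    unfold comparisonError
    rw [integral_add integrable_indicator_div_sq integrable_indicator_exp,
      integral_indicator measurableSet_Ioc, integral_indicator measurableSet_Ioi, hmid,
      integral_const_mul, integral_Ioi_exp_neg_mul_sub (by norm_num)]
  rw [setIntegral_eq_integral_of_forall_compl_eq_zero (s := Ioi 0)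
    fun _ hx => comparisonError_of_nonpos (not_lt.1 hx), hsum]
  norm_num at hexp ⊢
  linarith

theorem four_div_pi_sub_sqrt_ge : 0.0199 ≤ 4 / π - √(π / 2) := by
  have hpi := pi_lt_d4
  have hfour : 1.27323 ≤ 4 / π := by
    rw [le_div_iff₀ pi_pos]
    linarith
  have hsqrt : √(π / 2) ≤ 1.25332 := (sqrt_le_left (by norm_num)).2 (by linarith)
  linarith

theorem mul_exp_sub_besselJ0_sq_le {σ x : ℝ} (hσ : 1 ≤ σ) (hx : 0 < x) :
    σ * (0.42 ^ 2) ^ (σ - 1) *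
        ((exp (-(x ^ 2 / 2)) - besselJ0 x ^ 2) / x ^ 2 - comparisonError x) ≤
      (exp (-(x ^ 2 / 2)) ^ σ - (besselJ0 x ^ 2) ^ σ) / x ^ 2 := by
  have hκ : (0 : ℝ) ≤ σ * (0.42 ^ 2) ^ (σ - 1) := by positivity
  have hx2 : 0 ≤ x ^ 2 := sq_nonneg x
  rcases le_or_gt x 1.65 with h₁ | h₁
  · have herror : comparisonError x = 0 := by
      simp [comparisonError, h₁, (h₁.trans (by norm_num) : x ≤ 2.2)]
    rw [herror, sub_zero, ← mul_div_assoc]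
    gcongr
    exact mul_rpow_sub_one_mul_sub_le_rpow_sub_rpow (by norm_num)
      (pow_le_pow_left₀ (by norm_num) (le_besselJ0_of_le hx.le h₁) 2)
      (besselJ0_sq_le_exp hx.le (by linarith)) hσ
  rcases le_or_gt x 2.2 with h₂ | h₂
  · have herror : comparisonError x = 0.09 / x ^ 2 := by simp [comparisonError, h₁, h₂]
    rw [herror, ← sub_div]
    have hpow := rpow_le_rpow (sq_nonneg _) (besselJ0_sq_le_exp hx.le h₂) (zero_le_one.trans hσ)
    exact (mul_nonpos_of_nonneg_of_nonpos hκ (div_nonpos_of_nonpos_of_nonneg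
      (by linarith [exp_sub_besselJ0_sq_le h₁.le h₂]) hx2)).trans
      (div_nonneg (sub_nonneg.2 hpow) hx2)
  · have herror : exp (-(x ^ 2 / 2)) / x ^ 2 ≤ comparisonError x := by
      refine (exp_neg_sq_div_two_div_sq_le (a := 2.2) (by norm_num) (by norm_num) h₂.le).trans_eq ?_
      simp [comparisonError, h₂, h₂.not_ge]
    have hV : besselJ0 x ^ 2 ≤ 0.42 ^ 2 := sq_le_sq' (abs_le.1 (abs_besselJ0_le h₂.le)).1
      (abs_le.1 (abs_besselJ0_le h₂.le)).2
    have hpow := rpow_le_mul_rpow_sub_one_mul (sq_nonneg (besselJ0 x)) hV hσ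
    calc σ * (0.42 ^ 2) ^ (σ - 1) *
          ((exp (-(x ^ 2 / 2)) - besselJ0 x ^ 2) / x ^ 2 - comparisonError x)
        ≤ σ * (0.42 ^ 2) ^ (σ - 1) * (-besselJ0 x ^ 2 / x ^ 2) := by
          gcongr
          rw [sub_div, neg_div]
          linarith
      _ = -(σ * (0.42 ^ 2) ^ (σ - 1) * besselJ0 x ^ 2) / x ^ 2 := by ring
      _ ≤ _ := by
          gcongr
          linarith [rpow_nonneg (exp_pos (-(x ^ 2 / 2))).le σ]

theorem integrableOn_Ioi_one_sub_exp_neg_mul_sq_div_sq {a : ℝ} (ha : 0 ≤ a) :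
    IntegrableOn (fun x => (1 - exp (-(a * x ^ 2))) / x ^ 2) (Ioi 0) := by
  have hexp (x : ℝ) : exp (-(a * x ^ 2)) ≤ 1 := exp_le_one_iff.2 (neg_nonpos.2 (by positivity))
  refine integrableOn_Ioi_div_sq (C := max a 1) (by fun_prop) (fun x => ?_) fun x => ?_ <;>
    rw [abs_of_nonneg (sub_nonneg.2 (hexp x))]
  · have := one_sub_le_exp_neg (a * x ^ 2)
    nlinarith [mul_le_mul_of_nonneg_right (le_max_left a 1) (sq_nonneg x)]
  · linarith [exp_pos (-(a * x ^ 2)), le_max_right a 1]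

theorem besselJ0_sq_le_one (x : ℝ) : besselJ0 x ^ 2 ≤ 1 :=
  (sq_le_one_iff_abs_le_one _).2 (abs_besselJ0_le_one x)

theorem one_sub_besselJ0_sq_le (x : ℝ) : 1 - besselJ0 x ^ 2 ≤ x ^ 2 / 2 := by
  nlinarith [one_sub_sq_div_four_le_besselJ0 x, sq_nonneg (1 - besselJ0 x)]

theorem integrableOn_Ioi_one_sub_besselJ0_sq_rpow_div_sq {σ : ℝ} (hσ : 1 ≤ σ) :
    IntegrableOn (fun x => (1 - (besselJ0 x ^ 2) ^ σ) / x ^ 2) (Ioi 0) := by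
  have hσ0 : 0 ≤ σ := zero_le_one.trans hσ
  have hle (x : ℝ) : (besselJ0 x ^ 2) ^ σ ≤ 1 :=
    rpow_le_one (sq_nonneg _) (besselJ0_sq_le_one x) hσ0
  have hcont : Continuous fun x => 1 - (besselJ0 x ^ 2) ^ σ :=
    continuous_const.sub ((continuous_besselJ0.pow 2).rpow_const fun _ => .inr hσ0)
  refine integrableOn_Ioi_div_sq (C := σ) hcont (fun x => ?_) fun x => ?_ <;>
    rw [abs_of_nonneg (sub_nonneg.2 (hle x))]
  · have hbernoulli := one_add_mul_self_le_rpow_one_add (s := besselJ0 x ^ 2 - 1)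
      (by linarith [sq_nonneg (besselJ0 x)]) hσ
    rw [add_sub_cancel] at hbernoulli
    nlinarith [one_sub_besselJ0_sq_le x, sq_nonneg x]
  · linarith [rpow_nonneg (sq_nonneg (besselJ0 x)) σ]

theorem sqrt_pi_mul_le_integral_Ioi_one_sub_besselJ0_sq_rpow_div_sq {σ : ℝ} (hσ : 1 ≤ σ) :
    √(π * (σ / 2)) ≤ ∫ x in Ioi (0 : ℝ), (1 - (besselJ0 x ^ 2) ^ σ) / x ^ 2 := by
  have : 0 < σ := by linarith
  have hV := integrableOn_Ioi_one_sub_besselJ0_sq_rpow_div_sq hσ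
  have hV₁ := integrableOn_Ioi_one_sub_besselJ0_sq_rpow_div_sq le_rfl
  have hU := integrableOn_Ioi_one_sub_exp_neg_mul_sq_div_sq (a := σ / 2) (by positivity)
  have hU₁ := integrableOn_Ioi_one_sub_exp_neg_mul_sq_div_sq (a := 1 / 2) (by norm_num)
  have herror := integrable_comparisonError.integrableOn (s := Ioi 0)
  simp only [rpow_one] at hV₁
  have hcompare := setIntegral_mono_on (((hV₁.sub hU₁).sub herror).const_mul
    (σ * (0.42 ^ 2) ^ (σ - 1))) (hV.sub hU) measurableSet_Ioi fun x hx => by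
      have hexp : exp (-(σ / 2 * x ^ 2)) = exp (-(x ^ 2 / 2)) ^ σ := by
        rw [← exp_mul]
        ring_nf
      simp only [Pi.sub_apply, ← sub_div, sub_sub_sub_cancel_left, one_div_mul_eq_div, hexp]
      exact mul_exp_sub_besselJ0_sq_le hσ hx
  have hgap : 0 ≤ σ * (0.42 ^ 2) ^ (σ - 1) *
      (4 / π - √(π / 2) - ∫ x in Ioi (0 : ℝ), comparisonError x) :=
    mul_nonneg (by positivity)
      (by linarith [four_div_pi_sub_sqrt_ge, integral_Ioi_comparisonError_le])
  rw [integral_const_mul, integral_sub' (hV₁.sub hU₁) herror, integral_sub' hV₁ hU₁,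
    integral_sub' hV hU, integral_Ioi_one_sub_besselJ0_sq_div_sq,
    integral_Ioi_one_sub_exp_neg_mul_sq_div_sq (by norm_num),
    integral_Ioi_one_sub_exp_neg_mul_sq_div_sq (by positivity), mul_one_div] at hcompare
  linarith

/-! ### No dominant coefficient -/

theorem integrableOn_Ioi_one_sub_besselJ0_mul_sq_rpow_div_sq {a σ : ℝ} (ha : 0 < a)
    (hσ : 1 ≤ σ) :
    IntegrableOn (fun t => (1 - (besselJ0 (t * a) ^ 2) ^ σ) / t ^ 2) (Ioi 0) :=
  integrableOn_Ioi_comp_mul_div_sq (f := fun x => 1 - (besselJ0 x ^ 2) ^ σ)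
    (integrableOn_Ioi_one_sub_besselJ0_sq_rpow_div_sq hσ) ha

theorem sqrt_pi_mul_le_integral_Ioi_one_sub_besselJ0_mul_sq_rpow_div_sq {a A : ℝ} (ha : 0 < a)
    (hA : 2 * a ^ 2 ≤ A) :
    √π / 2 * √A ≤
      ∫ t in Ioi (0 : ℝ), (1 - (besselJ0 (t * a) ^ 2) ^ (A / (2 * a ^ 2))) / t ^ 2 := by
  have hσ : 1 ≤ A / (2 * a ^ 2) := (one_le_div (by positivity)).2 hA
  have hsqrt : √(π * (A / (2 * a ^ 2) / 2)) = √π / 2 * √A / a := by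
    have : A / (2 * a ^ 2) / 2 = A / (2 * a) ^ 2 := by ring
    rw [this, sqrt_mul pi_pos.le, sqrt_div' _ (sq_nonneg _), sqrt_sq (by positivity)]
    ring
  have h := sqrt_pi_mul_le_integral_Ioi_one_sub_besselJ0_sq_rpow_div_sq hσ
  rw [hsqrt, div_le_iff₀' ha] at h
  rwa [integral_Ioi_comp_mul_div_sq (fun x => 1 - (besselJ0 x ^ 2) ^ (A / (2 * a ^ 2))) ha]

theorem prod_le_sum_mul_sq_rpow {ι : Type*} (s : Finset ι) {p x : ι → ℝ} (hp : ∀ j ∈ s, 0 < p j)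
    (hp1 : ∑ j ∈ s, p j = 1) :
    ∏ j ∈ s, x j ≤ ∑ j ∈ s, p j * (x j ^ 2) ^ (1 / (2 * p j)) :=
  calc ∏ j ∈ s, x j ≤ ∏ j ∈ s, |x j| := (le_abs_self _).trans_eq (Finset.abs_prod s x)
    _ = ∏ j ∈ s, ((x j ^ 2) ^ (1 / (2 * p j))) ^ p j := Finset.prod_congr rfl fun j hj => by
        have hexponent : 1 / (2 * p j) * p j = 1 / 2 := by
          have := (hp j hj).ne'
          field
        rw [← rpow_mul (sq_nonneg _), hexponent, ← sqrt_eq_rpow, sqrt_sq_eq_abs]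
    _ ≤ _ := geom_mean_le_arith_mean_weighted s p _ (fun j hj => (hp j hj).le) hp1
        fun _ _ => rpow_nonneg (sq_nonneg _) _

section NoDominant

variable {ι : Type*} [Fintype ι]

-- Hölder's inequality, in the form of weighted AM-GM with weights `‖b j‖² / A`, separates the
-- factors of the product of Bessel functions.
theorem sqrt_pi_mul_le_integral_norm_steinhausSum_of_ne_zero (b : ι → ℂ) {s : Finset ι}
    (hs : s.Nonempty) (hb : ∀ j ∈ s, b j ≠ 0)
    (hle : ∀ k ∈ s, 2 * ‖b k‖ ^ 2 ≤ ∑ j ∈ s, ‖b j‖ ^ 2) :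
    √π / 2 * √(∑ j ∈ s, ‖b j‖ ^ 2) ≤ ∫ z, ‖steinhausSum b s z‖ ∂torusMeasure ι := by
  set A := ∑ j ∈ s, ‖b j‖ ^ 2
  have hbpos (j : ι) (hj : j ∈ s) : 0 < ‖b j‖ := norm_pos_iff.2 (hb j hj)
  have hA : 0 < A := Finset.sum_pos (fun j hj => pow_pos (hbpos j hj) 2) hs
  have hp1 : ∑ j ∈ s, ‖b j‖ ^ 2 / A = 1 := by rw [← Finset.sum_div, div_self hA.ne']
  have hσ (j : ι) (hj : j ∈ s) : 1 ≤ A / (2 * ‖b j‖ ^ 2) :=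
    (one_le_div (mul_pos two_pos (pow_pos (hbpos j hj) 2))).2 (hle j hj)
  have hint (j : ι) (hj : j ∈ s) := (integrableOn_Ioi_one_sub_besselJ0_mul_sq_rpow_div_sq
    (hbpos j hj) (hσ j hj)).integrable.const_mul (‖b j‖ ^ 2 / A)
  calc √π / 2 * √A = ∑ j ∈ s, ‖b j‖ ^ 2 / A * (√π / 2 * √A) := by
        rw [← Finset.sum_mul, hp1, one_mul]
    _ ≤ ∑ j ∈ s, ‖b j‖ ^ 2 / A * ∫ t in Ioi (0 : ℝ),
          (1 - (besselJ0 (t * ‖b j‖) ^ 2) ^ (A / (2 * ‖b j‖ ^ 2))) / t ^ 2 := by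
        gcongr with j hj
        exact sqrt_pi_mul_le_integral_Ioi_one_sub_besselJ0_mul_sq_rpow_div_sq (hbpos j hj)
          (hle j hj)
    _ = ∫ t in Ioi (0 : ℝ), ∑ j ∈ s, ‖b j‖ ^ 2 / A *
          ((1 - (besselJ0 (t * ‖b j‖) ^ 2) ^ (A / (2 * ‖b j‖ ^ 2))) / t ^ 2) := by
        simp only [← integral_const_mul]
        exact (integral_finsetSum s hint).symm
    _ ≤ ∫ t in Ioi (0 : ℝ), (1 - ∏ j ∈ s, besselJ0 (t * ‖b j‖)) / t ^ 2 := by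
        refine setIntegral_mono_on (integrable_finsetSum s hint)
          (integrableOn_Ioi_one_sub_prod_besselJ0_div_sq b s) measurableSet_Ioi fun t _ => ?_
        have hprod := prod_le_sum_mul_sq_rpow s (x := fun j => besselJ0 (t * ‖b j‖))
          (fun j hj => div_pos (pow_pos (hbpos j hj) 2) hA) hp1
        simp only [mul_div_assoc', one_div_div] at hprod
        simp only [← mul_div_assoc, ← Finset.sum_div, mul_sub, mul_one, Finset.sum_sub_distrib, hp1]
        gcongr
    _ = ∫ z, ‖steinhausSum b s z‖ ∂torusMeasure ι :=
        (integral_norm_steinhausSum_eq_integral_Ioi b s).symm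

theorem sqrt_pi_mul_le_integral_norm_steinhausSum_of_forall_two_mul_sq_le (b : ι → ℂ)
    (hle : ∀ k, 2 * ‖b k‖ ^ 2 ≤ ∑ j, ‖b j‖ ^ 2) :
    √π / 2 * √(∑ j, ‖b j‖ ^ 2) ≤ ∫ z, ‖steinhausSum b Finset.univ z‖ ∂torusMeasure ι := by
  classical
  set s := Finset.univ.filter fun j => b j ≠ 0
  have hsum : ∑ j ∈ s, ‖b j‖ ^ 2 = ∑ j, ‖b j‖ ^ 2 :=
    Finset.sum_filter_of_ne fun j _ hj => by simpa using hj
  have hS : steinhausSum b s = steinhausSum b Finset.univ :=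
    funext fun z => Finset.sum_filter_of_ne fun j _ hj => left_ne_zero_of_mul hj
  rw [← hS, ← hsum]
  rcases s.eq_empty_or_nonempty with hs | hs
  · simp [hs, steinhausSum]
  · exact sqrt_pi_mul_le_integral_norm_steinhausSum_of_ne_zero b hs
      (fun j hj => (Finset.mem_filter.1 hj).2) fun k _ => hsum ▸ hle k

end NoDominant

/-! ### One dominant coefficient -/

theorem integral_circleHaar_comp_mul_eq_apply_zero {f : ℂ → ℂ} {c : ℂ}
    (hf : DifferentiableOn ℂ f (Metric.closedBall 0 ‖c‖)) :
    ∫ u : Circle, f (u * c) ∂circleHaar = f 0 := by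
  have hcont : Continuous fun u : Circle => f (u * ‖c‖) :=
    hf.continuousOn.comp_continuous (by fun_prop) fun u => by simp [Circle.norm_coe]
  have haverage := DiffContOnCl.circleAverage (f := f) (c := 0) (R := ‖c‖)
    (hf.diffContOnCl_ball (by simp))
  rw [integral_circleHaar_mul_eq_norm, integral_circleHaar hcont, ← haverage, circleAverage]
  simp only [Circle.coe_exp, circleMap, zero_add, mul_comm]

/-- The second Taylor polynomial at `0` of `w ↦ √(1 + w)`. -/
noncomputable def sqrtTaylor (w : ℂ) : ℂ := 1 + w / 2 - w ^ 2 / 8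

theorem sqrtTaylor_ne_zero {w : ℂ} (hw : ‖w‖ ≤ 1) : sqrtTaylor w ≠ 0 := by
  intro h
  have h1 : (1 : ℂ) = w ^ 2 / 8 - w / 2 := by
    rw [sqrtTaylor] at h
    linear_combination h
  have htriangle : ‖(1 : ℂ)‖ ≤ ‖w ^ 2 / 8‖ + ‖w / 2‖ := h1 ▸ norm_sub_le _ _
  simp only [norm_one, norm_div, norm_pow, Complex.norm_ofNat] at htriangle
  nlinarith [norm_nonneg w]

/-- On the circle `‖w‖ ^ 2 = R` this is a holomorphic function that vanishes at `0` and whose real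
part is that of `(1 + w) * conj P / P`, with `P = sqrtTaylor w`, minus its mean value
`1 + R / 4 + R ^ 2 / 64`. Holomorphy comes from eliminating `conj w = R / w`, which is possible
without a pole because `1 + w - P ^ 2` is divisible by `w ^ 3`. -/
noncomputable def sqrtTaylorError (R w : ℂ) : ℂ :=
  w * (1 / 8 - w / 64) * (w ^ 2 + R * w / 2 - R ^ 2 / 8) / sqrtTaylor w +
    w - w ^ 2 / 4 - R * w / 8

theorem differentiableOn_sqrtTaylorError (R : ℂ) :
    DifferentiableOn ℂ (sqrtTaylorError R) (Metric.closedBall 0 1) := by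
  have hP : DifferentiableOn ℂ sqrtTaylor (Metric.closedBall 0 1) := by
    unfold sqrtTaylor
    fun_prop
  have hP0 (w : ℂ) (hw : w ∈ Metric.closedBall 0 1) : sqrtTaylor w ≠ 0 :=
    sqrtTaylor_ne_zero (mem_closedBall_zero_iff.1 hw)
  unfold sqrtTaylorError
  exact (((DifferentiableOn.div (by fun_prop) hP hP0).add (by fun_prop)).sub (by fun_prop)).sub
    (by fun_prop)

theorem re_one_add_mul_star_sqrtTaylor_div {w : ℂ} (hw : ‖w‖ ≤ 1) :
    ((1 + w) * (star (sqrtTaylor w) / sqrtTaylor w)).re =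
      1 + ‖w‖ ^ 2 / 4 + ‖w‖ ^ 4 / 64 + (sqrtTaylorError (‖w‖ ^ 2 : ℝ) w).re := by
  have hR : ((‖w‖ ^ 2 : ℝ) : ℂ) = w * star w := by
    rw [Complex.star_def, Complex.mul_conj, Complex.normSq_eq_norm_sq]
  have hstar : star (sqrtTaylor w) = 1 + star w / 2 - star w ^ 2 / 8 := by
    simp [sqrtTaylor]
  have hsplit : (1 + w) * (star (sqrtTaylor w) / sqrtTaylor w) =
      ((1 + ‖w‖ ^ 2 / 4 + ‖w‖ ^ 4 / 64 : ℝ) : ℂ) + sqrtTaylorError (‖w‖ ^ 2 : ℝ) w +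
        ((star w - w) / 2 - (star w ^ 2 - w ^ 2) / 8 - w * star w * (star w - w) / 16) := by
    have hP := sqrtTaylor_ne_zero hw
    have hmean : ((1 + ‖w‖ ^ 2 / 4 + ‖w‖ ^ 4 / 64 : ℝ) : ℂ) =
        1 + w * star w / 4 + (w * star w) ^ 2 / 64 := by
      rw [← hR]
      push_cast
      ring
    rw [hmean, hR, hstar, sqrtTaylorError]
    field_simp
    rw [sqrtTaylor]
    ring
  have himaginary : ((star w - w) / 2 - (star w ^ 2 - w ^ 2) / 8 -
      w * star w * (star w - w) / 16).re = 0 := by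
    obtain ⟨x, y⟩ := w
    simp [sq, mul_comm y]
  rw [hsplit, Complex.add_re, Complex.add_re, himaginary, Complex.ofReal_re, add_zero]

theorem one_add_re_sqrtTaylorError_le_norm {w : ℂ} (hw : ‖w‖ ≤ 1) :
    1 + ‖w‖ ^ 2 / 4 + ‖w‖ ^ 4 / 64 + (sqrtTaylorError (‖w‖ ^ 2 : ℝ) w).re ≤ ‖1 + w‖ := by
  rw [← re_one_add_mul_star_sqrtTaylor_div hw]
  refine (Complex.re_le_norm _).trans_eq ?_
  rw [norm_mul, norm_div, norm_star, div_self (norm_ne_zero_iff.2 (sqrtTaylor_ne_zero hw)), mul_one]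

theorem le_integral_circleHaar_norm_one_add_mul {c : ℂ} (hc : ‖c‖ ≤ 1) :
    1 + ‖c‖ ^ 2 / 4 + ‖c‖ ^ 4 / 64 ≤ ∫ u : Circle, ‖1 + u * c‖ ∂circleHaar := by
  have hdiff := (differentiableOn_sqrtTaylorError (‖c‖ ^ 2 : ℝ)).mono
    (Metric.closedBall_subset_closedBall hc)
  have hcont : Continuous fun u : Circle => sqrtTaylorError (‖c‖ ^ 2 : ℝ) (u * c) :=
    hdiff.continuousOn.comp_continuous (by fun_prop) fun u => by simp [Circle.norm_coe]
  have hre : Continuous fun u : Circle => (sqrtTaylorError (‖c‖ ^ 2 : ℝ) (u * c)).re :=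
    Complex.continuous_re.comp hcont
  have hmean : ∫ u : Circle, (sqrtTaylorError (‖c‖ ^ 2 : ℝ) (u * c)).re ∂circleHaar = 0 := by
    have h := integral_re (integrable_of_continuous (μ := circleHaar) hcont)
    simp only [RCLike.re_to_complex] at h
    rw [h, integral_circleHaar_comp_mul_eq_apply_zero hdiff]
    simp [sqrtTaylorError]
  have hle : ∫ u : Circle, (1 + ‖c‖ ^ 2 / 4 + ‖c‖ ^ 4 / 64 +
      (sqrtTaylorError (‖c‖ ^ 2 : ℝ) (u * c)).re) ∂circleHaar ≤
        ∫ u : Circle, ‖1 + u * c‖ ∂circleHaar :=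
    integral_mono (integrable_of_continuous (continuous_const.add hre))
      (integrable_of_continuous (by fun_prop)) fun u => by
        have hnorm : ‖(u : ℂ) * c‖ = ‖c‖ := by rw [norm_mul, Circle.norm_coe, one_mul]
        simpa only [hnorm] using one_add_re_sqrtTaylorError_le_norm (hnorm.trans_le hc)
  rw [integral_add (integrable_const _) (integrable_of_continuous hre), hmean] at hle
  simpa only [integral_const, probReal_univ, one_smul, add_zero] using hle

theorem integral_circleHaar_norm_mul_add_comm (c w : ℂ) :
    ∫ u : Circle, ‖u * c + w‖ ∂circleHaar = ∫ u : Circle, ‖u * w + c‖ ∂circleHaar := by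
  have hnorm (c w : ℂ) (u : Circle) :
      ‖u * c + w‖ = √(‖c‖ ^ 2 + ‖w‖ ^ 2 + 2 * (u * (c * star w)).re) := by
    rw [← norm_circle_mul_add_sq, sqrt_sq (norm_nonneg _)]
  simp only [hnorm]
  rw [integral_circleHaar_mul_eq_norm (fun z => √(‖c‖ ^ 2 + ‖w‖ ^ 2 + 2 * z.re)),
    integral_circleHaar_mul_eq_norm (fun z => √(‖w‖ ^ 2 + ‖c‖ ^ 2 + 2 * z.re))]
  simp only [norm_mul, norm_star, mul_comm ‖c‖, add_comm (‖c‖ ^ 2)]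

theorem le_integral_circleHaar_norm_mul_add_of_norm_le {c w : ℂ} (hw : w ≠ 0) (hcw : ‖c‖ ≤ ‖w‖) :
    ‖w‖ * (1 + (‖c‖ / ‖w‖) ^ 2 / 4 + (‖c‖ / ‖w‖) ^ 4 / 64) ≤
      ∫ u : Circle, ‖u * c + w‖ ∂circleHaar := by
  have hfactor (u : Circle) : ‖u * c + w‖ = ‖w‖ * ‖1 + u * (c / w)‖ := by
    rw [← norm_mul, mul_add, mul_one, mul_left_comm, mul_div_cancel₀ _ hw, add_comm]
  simp only [hfactor]
  rw [integral_const_mul, ← norm_div]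
  gcongr
  refine le_integral_circleHaar_norm_one_add_mul ?_
  rw [norm_div]
  exact div_le_one_of_le₀ hcw (norm_nonneg w)

theorem quartic_le_mul_of_one_le {r : ℝ} (hr : 1 ≤ r) :
    0.97 + 0.3 * r ^ 2 - 0.0075 * r ^ 4 ≤ r * (1 + (1 / r) ^ 2 / 4 + (1 / r) ^ 4 / 64) := by
  have hpoly : 0 ≤ 0.48 * r ^ 7 - 19.2 * r ^ 5 + 64 * r ^ 4 - 62.08 * r ^ 3 + 16 * r ^ 2 + 1 := by
    obtain ⟨s, hs, rfl⟩ : ∃ s, 0 ≤ s ∧ r = 1 + s := ⟨r - 1, by linarith, by ring⟩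
    have hquintic : 0 ≤ 31.84 + 18.72 * s - 15.2 * s ^ 2 - 9.12 * s ^ 3 + 3.36 * s ^ 4 +
        0.48 * s ^ 5 := by
      have hsq := sq_nonneg (s - 2.05)
      nlinarith [mul_nonneg hs hsq, mul_nonneg (pow_nonneg hs 2) hsq,
        mul_nonneg (pow_nonneg hs 3) hsq]
    nlinarith [mul_nonneg (sq_nonneg s) hquintic]
  have : 0 < r := by linarith
  have hdiff : r * (1 + (1 / r) ^ 2 / 4 + (1 / r) ^ 4 / 64) -
      (0.97 + 0.3 * r ^ 2 - 0.0075 * r ^ 4) =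
        (0.48 * r ^ 7 - 19.2 * r ^ 5 + 64 * r ^ 4 - 62.08 * r ^ 3 + 16 * r ^ 2 + 1) /
          (64 * r ^ 3) := by
    field_simp
    ring
  rw [← sub_nonneg, hdiff]
  positivity

theorem quartic_le_integral_circleHaar_norm_mul_add {c : ℂ} (hc : c ≠ 0) (w : ℂ) :
    ‖c‖ * (0.97 + 0.3 * (‖w‖ / ‖c‖) ^ 2 - 0.0075 * (‖w‖ / ‖c‖) ^ 4) ≤
      ∫ u : Circle, ‖u * c + w‖ ∂circleHaar := by
  have hc0 : 0 < ‖c‖ := norm_pos_iff.2 hc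
  rcases le_total ‖w‖ ‖c‖ with h | h
  · rw [integral_circleHaar_norm_mul_add_comm]
    refine le_trans ?_ (le_integral_circleHaar_norm_mul_add_of_norm_le hc h)
    gcongr
    nlinarith [sq_nonneg ((‖w‖ / ‖c‖) ^ 2 - 1.08)]
  · have hw : w ≠ 0 := norm_pos_iff.1 (hc0.trans_le h)
    calc ‖c‖ * (0.97 + 0.3 * (‖w‖ / ‖c‖) ^ 2 - 0.0075 * (‖w‖ / ‖c‖) ^ 4)
        ≤ ‖c‖ * (‖w‖ / ‖c‖ * (1 + (1 / (‖w‖ / ‖c‖)) ^ 2 / 4 + (1 / (‖w‖ / ‖c‖)) ^ 4 / 64)) := by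
          gcongr
          exact quartic_le_mul_of_one_le ((one_le_div hc0).2 h)
      _ = ‖w‖ * (1 + (‖c‖ / ‖w‖) ^ 2 / 4 + (‖c‖ / ‖w‖) ^ 4 / 64) := by
          rw [one_div_div, ← mul_assoc, mul_div_cancel₀ _ hc0.ne']
      _ ≤ _ := le_integral_circleHaar_norm_mul_add_of_norm_le hw h

theorem sqrt_pi_div_two_mul_sqrt_one_add_le {x : ℝ} (hx0 : 0 ≤ x) (hx1 : x ≤ 1) :
    √π / 2 * √(1 + x) ≤ 0.97 + 0.3 * x - 0.015 * x ^ 2 := by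
  have hsqrt : √π / 2 * √(1 + x) = √(π * (1 + x) / 4) := by
    rw [sqrt_div (by positivity), sqrt_mul pi_pos.le, show (4 : ℝ) = 2 ^ 2 by norm_num,
      sqrt_sq zero_le_two]
    ring
  have hpi := pi_lt_d4
  have hchord : √π / 2 * √(1 + x) ≤ 0.97 + 0.285 * x := by
    rw [hsqrt, sqrt_le_left (by linarith)]
    nlinarith [mul_nonneg hx0 (sub_nonneg.2 hx1)]
  nlinarith [mul_nonneg hx0 (sub_nonneg.2 hx1)]

section Dominant

variable {ι : Type*} [Fintype ι]

theorem quartic_le_integral_norm_steinhausSum_insert [DecidableEq ι] (b : ι → ℂ) {s : Finset ι}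
    {k : ι} (hk : k ∉ s) (hbk : b k ≠ 0) :
    ‖b k‖ * (0.97 + 0.3 * ((∑ j ∈ s, ‖b j‖ ^ 2) / ‖b k‖ ^ 2) -
        0.015 * ((∑ j ∈ s, ‖b j‖ ^ 2) / ‖b k‖ ^ 2) ^ 2) ≤
      ∫ z, ‖steinhausSum b (insert k s) z‖ ∂torusMeasure ι := by
  calc ‖b k‖ * (0.97 + 0.3 * ((∑ j ∈ s, ‖b j‖ ^ 2) / ‖b k‖ ^ 2) -
        0.015 * ((∑ j ∈ s, ‖b j‖ ^ 2) / ‖b k‖ ^ 2) ^ 2)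
      = ‖b k‖ * (0.97 + 0.3 * ((∑ j ∈ s, ‖b j‖ ^ 2) / ‖b k‖ ^ 2) -
        0.0075 * (2 * (∑ j ∈ s, ‖b j‖ ^ 2) ^ 2 / ‖b k‖ ^ 4)) := by ring
    _ ≤ ‖b k‖ * (0.97 + 0.3 * ((∫ z, ‖steinhausSum b s z‖ ^ 2 ∂torusMeasure ι) / ‖b k‖ ^ 2) -
        0.0075 * ((∫ z, ‖steinhausSum b s z‖ ^ 4 ∂torusMeasure ι) / ‖b k‖ ^ 4)) := by
        rw [integral_norm_steinhausSum_sq]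
        gcongr
        exact integral_norm_steinhausSum_pow_four_le b s
    _ = ∫ z, ‖b k‖ * (0.97 + 0.3 * (‖steinhausSum b s z‖ / ‖b k‖) ^ 2 -
        0.0075 * (‖steinhausSum b s z‖ / ‖b k‖) ^ 4) ∂torusMeasure ι := by
        simp only [div_pow]
        rw [integral_const_mul, integral_sub (integrable_of_continuous (by fun_prop))
          (integrable_of_continuous (by fun_prop)), integral_add (integrable_const _)
          (integrable_of_continuous (by fun_prop)), integral_const_mul, integral_const_mul,
          integral_div, integral_div]
        simp only [integral_const, probReal_univ, one_smul]
    _ ≤ ∫ z, ∫ u : Circle, ‖u * b k + steinhausSum b s z‖ ∂circleHaar ∂torusMeasure ι :=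
        integral_mono (integrable_of_continuous (by fun_prop))
          (integrable_of_continuous (X := (ι → Circle) × Circle)
            (f := fun p => ‖p.2 * b k + steinhausSum b s p.1‖) (by fun_prop)).integral_prod_left
          fun z => quartic_le_integral_circleHaar_norm_mul_add hbk _
    _ = _ := (integral_steinhausSum_insert b hk (F := fun w => ‖w‖) (by fun_prop)).symm

theorem sqrt_pi_mul_le_integral_norm_steinhausSum_of_sum_sq_le (b : ι → ℂ) {k : ι}
    (hbk : b k ≠ 0) (hle : ∑ j, ‖b j‖ ^ 2 ≤ 2 * ‖b k‖ ^ 2) :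
    √π / 2 * √(∑ j, ‖b j‖ ^ 2) ≤ ∫ z, ‖steinhausSum b Finset.univ z‖ ∂torusMeasure ι := by
  classical
  have hbk0 : 0 < ‖b k‖ := norm_pos_iff.2 hbk
  set x := (∑ j ∈ Finset.univ.erase k, ‖b j‖ ^ 2) / ‖b k‖ ^ 2 with hx_def
  have hsum : ∑ j, ‖b j‖ ^ 2 = ‖b k‖ ^ 2 * (1 + x) := by
    rw [← Finset.add_sum_erase _ _ (Finset.mem_univ k), hx_def]
    field
  have hx0 : 0 ≤ x := by positivity
  have hx1 : x ≤ 1 := by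
    rw [hsum] at hle
    nlinarith [pow_pos hbk0 2]
  calc √π / 2 * √(∑ j, ‖b j‖ ^ 2) = ‖b k‖ * (√π / 2 * √(1 + x)) := by
        rw [hsum, sqrt_mul (sq_nonneg _), sqrt_sq hbk0.le]
        ring
    _ ≤ ‖b k‖ * (0.97 + 0.3 * x - 0.015 * x ^ 2) := by
        gcongr
        exact sqrt_pi_div_two_mul_sqrt_one_add_le hx0 hx1
    _ ≤ ∫ z, ‖steinhausSum b (insert k (Finset.univ.erase k)) z‖ ∂torusMeasure ι :=
        quartic_le_integral_norm_steinhausSum_insert b (Finset.notMem_erase k _) hbk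
    _ = _ := by rw [Finset.insert_erase (Finset.mem_univ k)]

end Dominant

end Steinhaus

theorem khintchine_steinhaus_L1_general {ι : Type*} [Fintype ι] (b : ι → ℂ) :
    Real.sqrt Real.pi / 2 * Real.sqrt (∑ j, ‖b j‖ ^ 2) ≤
      ∫ z : ι → Circle, ‖∑ j, b j * (z j : ℂ)‖ ∂(Steinhaus.torusMeasure ι) := by
  by_cases h : ∀ k, 2 * ‖b k‖ ^ 2 ≤ ∑ j, ‖b j‖ ^ 2
  · exact Steinhaus.sqrt_pi_mul_le_integral_norm_steinhausSum_of_forall_two_mul_sq_le b h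
  · push Not at h
    obtain ⟨k, hk⟩ := h
    refine Steinhaus.sqrt_pi_mul_le_integral_norm_steinhausSum_of_sum_sq_le b (fun hbk => ?_) hk.le
    rw [hbk, norm_zero, zero_pow two_ne_zero, mul_zero] at hk
    exact hk.not_ge (Finset.sum_nonneg fun j _ => sq_nonneg ‖b j‖)

/-- Sharp Khintchine inequality for Steinhaus variables at exponent 1:
`∫_{𝕋^d} |b₁z₁ + ⋯ + b_dz_d| dm ≥ (√π/2) ‖b‖₂`. -/
theorem khintchine_steinhaus_L1 (d : ℕ) (hd : 1 ≤ d) (b : Fin d → ℂ) :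
    Real.sqrt Real.pi / 2 * Real.sqrt (∑ j, ‖b j‖ ^ 2) ≤
      ∫ z : Fin d → Circle, ‖∑ j, b j * (z j : ℂ)‖ ∂(torusHaar d) := by
  exact khintchine_steinhaus_L1_general b
end
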